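/- arXiv:2101.00450 — 7 statements merged into one kernel-verified Lean document; each statement's English description precedes it below -/
import Mathlib

section
/- Let γ > 1, A0 > 0 and 0 < r0 < r1. Suppose ρ, U1, U2 : [r0, r1] → ℝ are differentiable with ρ(r) > 0, U1(r) ≠ 0 and M1(r)² < 1 for all r ∈ [r0, r1], and that (ρ, U1, U2) satisfies the radially symmetric steady Euler system on [r0, r1]. Then for every r ∈ [r0, r1]: (M1²)'(r) = M1(r)² (2 + (γ−1)M1(r)² + (γ+1)M2(r)²) / (r (M1(r)² − 1)), (M2²)'(r) = M2(r)² (2 + (γ−3)M1(r)² + (γ−1)M2(r)²) / (r (M1(r)² − 1)), and (M1² + M2²)'(r) = (M1(r)² + M2(r)²)(2 + (γ−1)(M1(r)² + M2(r)²)) / (r (M1(r)² − 1)). -/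
open Real Set

/-!
Put `q = ρ' / ρ`. Conservation of mass and of angular momentum say that `U1` and `U2` have
logarithmic derivatives `-1 / r - q` and `-1 / r`, while that of `c` is `(γ - 1) q / 2`; hence
`(M1²)' = -(2 / r + (γ + 1) q) M1²` and `(M2²)' = -(2 / r + (γ - 1) q) M2²`. Away from the sonic
set `M1² = 1`, the radial momentum equation determines `q = (M1² + M2²) / (r (1 - M1²))`.
-/

theorem hasDerivWithinAt_div_sq_of_logDeriv {𝕜 : Type*} [NontriviallyNormedField 𝕜]
    {u c : 𝕜 → 𝕜} {a b x : 𝕜} {s : Set 𝕜} (hu : HasDerivWithinAt u (u x * a) s x)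
    (hc : HasDerivWithinAt c (c x * b) s x) (hcx : c x ≠ 0) :
    HasDerivWithinAt (fun y => (u y / c y) ^ 2) (2 * (a - b) * (u x / c x) ^ 2) s x := by
  refine ((hu.fun_div hc hcx).fun_pow 2).congr_deriv ?_
  push_cast
  field_simp

/-- The sound speed `c = √(A0 γ) ρ^((γ - 1) / 2)` at density `ρ` of a polytropic gas with pressure
`p = A0 ρ^γ`. -/
noncomputable def soundSpeed (A0 γ ρ : ℝ) : ℝ :=
  √(A0 * γ) * ρ ^ ((γ - 1) / 2)

section SoundSpeed

variable {A0 γ : ℝ}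

theorem soundSpeed_pos {ρ : ℝ} (hA0γ : 0 < A0 * γ) (hρ : 0 < ρ) : 0 < soundSpeed A0 γ ρ :=
  mul_pos (sqrt_pos.2 hA0γ) (rpow_pos_of_pos hρ _)

theorem soundSpeed_sq {ρ : ℝ} (hA0γ : 0 ≤ A0 * γ) (hρ : 0 ≤ ρ) :
    soundSpeed A0 γ ρ ^ 2 = A0 * γ * ρ ^ (γ - 1) := by
  rw [soundSpeed, mul_pow, sq_sqrt hA0γ, ← rpow_mul_natCast hρ, Nat.cast_ofNat,
    div_mul_cancel₀ _ two_ne_zero]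

theorem hasDerivWithinAt_soundSpeed {ρ : ℝ → ℝ} {ρ' r : ℝ} {s : Set ℝ}
    (hρ : HasDerivWithinAt ρ ρ' s r) (hρr : ρ r ≠ 0) :
    HasDerivWithinAt (fun t => soundSpeed A0 γ (ρ t))
      (soundSpeed A0 γ (ρ r) * ((γ - 1) / 2 * (ρ' / ρ r))) s r := by
  refine ((hρ.rpow_const (p := (γ - 1) / 2) (.inl hρr)).const_mul √(A0 * γ)).congr_deriv ?_
  rw [soundSpeed, rpow_sub_one hρr]
  ring

end SoundSpeed

/-- The radially symmetric steady Euler system for a polytropic gas, with density `ρ`, radial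
velocity `U1` and azimuthal velocity `U2`, holds at the radius `r`. The numbers `ρ'`, `U1'`,
`U2'` are the derivatives at `r`, taken within `s` so that endpoints of an interval are covered;
the pressure gradient is written out as `A0 γ ρ^(γ - 1) ρ'`. -/
structure IsRadialEulerFlowWithinAt (A0 γ : ℝ) (ρ U1 U2 : ℝ → ℝ) (ρ' U1' U2' : ℝ)
    (s : Set ℝ) (r : ℝ) : Prop where
  hasDerivWithinAt_density : HasDerivWithinAt ρ ρ' s r
  hasDerivWithinAt_radial : HasDerivWithinAt U1 U1' s r
  hasDerivWithinAt_angular : HasDerivWithinAt U2 U2' s r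
  mass : ρ' * U1 r + ρ r * U1' + ρ r * U1 r / r = 0
  radial_momentum :
    U1 r * U1' + (1 / ρ r) * (A0 * γ * ρ r ^ (γ - 1) * ρ') - U2 r ^ 2 / r = 0
  angular_momentum : U1 r * U2' + U1 r * U2 r / r = 0

namespace IsRadialEulerFlowWithinAt

variable {A0 γ ρ' U1' U2' r : ℝ} {ρ U1 U2 : ℝ → ℝ} {s : Set ℝ}

theorem radial_deriv_eq (h : IsRadialEulerFlowWithinAt A0 γ ρ U1 U2 ρ' U1' U2' s r)
    (hρ : ρ r ≠ 0) : U1' = U1 r * (-1 / r - ρ' / ρ r) := by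
  apply mul_left_cancel₀ hρ
  linear_combination h.mass + U1 r * mul_div_cancel₀ ρ' hρ

theorem angular_deriv_eq (h : IsRadialEulerFlowWithinAt A0 γ ρ U1 U2 ρ' U1' U2' s r)
    (hU1 : U1 r ≠ 0) : U2' = U2 r * (-1 / r) := by
  apply mul_left_cancel₀ hU1
  linear_combination h.angular_momentum

theorem soundSpeed_sq_sub_mul_density_logDeriv
    (h : IsRadialEulerFlowWithinAt A0 γ ρ U1 U2 ρ' U1' U2' s r) (hA0γ : 0 ≤ A0 * γ)
    (hρ : 0 < ρ r) :
    (soundSpeed A0 γ (ρ r) ^ 2 - U1 r ^ 2) * (ρ' / ρ r) = (U1 r ^ 2 + U2 r ^ 2) / r := by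
  rw [soundSpeed_sq hA0γ hρ.le]
  linear_combination h.radial_momentum - U1 r * h.radial_deriv_eq hρ.ne'

theorem density_logDeriv_eq (h : IsRadialEulerFlowWithinAt A0 γ ρ U1 U2 ρ' U1' U2' s r)
    (hA0γ : 0 < A0 * γ) (hρ : 0 < ρ r) (hr : r ≠ 0)
    (hsonic : (U1 r / soundSpeed A0 γ (ρ r)) ^ 2 ≠ 1) :
    ρ' / ρ r = ((U1 r / soundSpeed A0 γ (ρ r)) ^ 2 + (U2 r / soundSpeed A0 γ (ρ r)) ^ 2) /
      (r * (1 - (U1 r / soundSpeed A0 γ (ρ r)) ^ 2)) := by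
  have momentum := h.soundSpeed_sq_sub_mul_density_logDeriv hA0γ.le hρ
  have hc := (soundSpeed_pos hA0γ hρ).ne'
  generalize soundSpeed A0 γ (ρ r) = c at *
  rw [eq_div_iff (mul_ne_zero hr (sub_ne_zero.2 hsonic.symm))]
  rw [eq_div_iff hr] at momentum
  apply mul_left_cancel₀ (pow_ne_zero 2 hc)
  calc c ^ 2 * (ρ' / ρ r * (r * (1 - (U1 r / c) ^ 2)))
      = (c ^ 2 - U1 r ^ 2) * (ρ' / ρ r) * r := by field_simp
    _ = U1 r ^ 2 + U2 r ^ 2 := momentum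
    _ = c ^ 2 * ((U1 r / c) ^ 2 + (U2 r / c) ^ 2) := by field_simp

theorem hasDerivWithinAt_radial_mach_sq
    (h : IsRadialEulerFlowWithinAt A0 γ ρ U1 U2 ρ' U1' U2' s r) (hA0γ : 0 < A0 * γ)
    (hρ : 0 < ρ r) :
    HasDerivWithinAt (fun t => (U1 t / soundSpeed A0 γ (ρ t)) ^ 2)
      (-(2 / r + (γ + 1) * (ρ' / ρ r)) * (U1 r / soundSpeed A0 γ (ρ r)) ^ 2) s r := by
  refine (hasDerivWithinAt_div_sq_of_logDeriv
    (h.hasDerivWithinAt_radial.congr_deriv (h.radial_deriv_eq hρ.ne'))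
    (hasDerivWithinAt_soundSpeed h.hasDerivWithinAt_density hρ.ne')
    (soundSpeed_pos hA0γ hρ).ne').congr_deriv ?_
  ring

theorem hasDerivWithinAt_angular_mach_sq
    (h : IsRadialEulerFlowWithinAt A0 γ ρ U1 U2 ρ' U1' U2' s r) (hA0γ : 0 < A0 * γ)
    (hρ : 0 < ρ r) (hU1 : U1 r ≠ 0) :
    HasDerivWithinAt (fun t => (U2 t / soundSpeed A0 γ (ρ t)) ^ 2)
      (-(2 / r + (γ - 1) * (ρ' / ρ r)) * (U2 r / soundSpeed A0 γ (ρ r)) ^ 2) s r := by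
  refine (hasDerivWithinAt_div_sq_of_logDeriv
    (h.hasDerivWithinAt_angular.congr_deriv (h.angular_deriv_eq hU1))
    (hasDerivWithinAt_soundSpeed h.hasDerivWithinAt_density hρ.ne')
    (soundSpeed_pos hA0γ hρ).ne').congr_deriv ?_
  ring

end IsRadialEulerFlowWithinAt

theorem mach_number_odes_general {A0 γ ρ' U1' U2' r : ℝ} {ρ U1 U2 c M1 M2 : ℝ → ℝ} {s : Set ℝ}
    (h : IsRadialEulerFlowWithinAt A0 γ ρ U1 U2 ρ' U1' U2' s r) (hA0γ : 0 < A0 * γ)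
    (hr : r ≠ 0) (hρ : 0 < ρ r) (hU1 : U1 r ≠ 0) (hc : ∀ t, c t = soundSpeed A0 γ (ρ t))
    (hM1 : ∀ t, M1 t = U1 t / c t) (hM2 : ∀ t, M2 t = U2 t / c t) (hsonic : M1 r ^ 2 ≠ 1) :
    HasDerivWithinAt (fun t => M1 t ^ 2)
      (M1 r ^ 2 * (2 + (γ - 1) * M1 r ^ 2 + (γ + 1) * M2 r ^ 2) / (r * (M1 r ^ 2 - 1))) s r ∧
    HasDerivWithinAt (fun t => M2 t ^ 2)
      (M2 r ^ 2 * (2 + (γ - 3) * M1 r ^ 2 + (γ - 1) * M2 r ^ 2) / (r * (M1 r ^ 2 - 1))) s r ∧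
    HasDerivWithinAt (fun t => M1 t ^ 2 + M2 t ^ 2)
      ((M1 r ^ 2 + M2 r ^ 2) * (2 + (γ - 1) * (M1 r ^ 2 + M2 r ^ 2)) / (r * (M1 r ^ 2 - 1)))
      s r := by
  have radial := h.hasDerivWithinAt_radial_mach_sq hA0γ hρ
  have angular := h.hasDerivWithinAt_angular_mach_sq hA0γ hρ hU1
  simp only [hM1, hc] at hsonic
  rw [h.density_logDeriv_eq hA0γ hρ hr hsonic] at radial angular
  simp only [← hc, ← hM1, ← hM2] at radial angular hsonic
  have hsub : 1 - M1 r ^ 2 ≠ 0 := sub_ne_zero.2 hsonic.symm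
  refine ⟨radial.congr_deriv ?_, angular.congr_deriv ?_, (radial.add angular).congr_deriv ?_⟩ <;>
  · generalize M1 r ^ 2 = m at *
    rw [← neg_sub 1 m]
    field_simp
    ring

/-- For a radially symmetric steady Euler flow on `[r0, r1]` with positive
density, nonvanishing radial velocity and subsonic radial Mach number, the squared Mach
numbers `M1²`, `M2²` and the squared total Mach number satisfy the stated ODEs. -/
theorem mach_number_odes
    (γ A0 r0 r1 : ℝ) (hγ : 1 < γ) (hA0 : 0 < A0) (hr0 : 0 < r0) (hr01 : r0 < r1)
    (ρ U1 U2 ρ' U1' U2' : ℝ → ℝ)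
    (hρ : ∀ r ∈ Icc r0 r1, HasDerivWithinAt ρ (ρ' r) (Icc r0 r1) r)
    (hU1 : ∀ r ∈ Icc r0 r1, HasDerivWithinAt U1 (U1' r) (Icc r0 r1) r)
    (hU2 : ∀ r ∈ Icc r0 r1, HasDerivWithinAt U2 (U2' r) (Icc r0 r1) r)
    (hρpos : ∀ r ∈ Icc r0 r1, 0 < ρ r)
    (hU1ne : ∀ r ∈ Icc r0 r1, U1 r ≠ 0)
    (c M1 M2 : ℝ → ℝ)
    (hc : ∀ r, c r = Real.sqrt (A0 * γ) * ρ r ^ ((γ - 1) / 2))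
    (hM1 : ∀ r, M1 r = U1 r / c r) (hM2 : ∀ r, M2 r = U2 r / c r)
    (hsub : ∀ r ∈ Icc r0 r1, (M1 r) ^ 2 < 1)
    (heq1 : ∀ r ∈ Icc r0 r1, ρ' r * U1 r + ρ r * U1' r + ρ r * U1 r / r = 0)
    (heq2 : ∀ r ∈ Icc r0 r1,
      U1 r * U1' r + (1 / ρ r) * (A0 * γ * ρ r ^ (γ - 1) * ρ' r) - (U2 r) ^ 2 / r = 0)
    (heq3 : ∀ r ∈ Icc r0 r1, U1 r * U2' r + U1 r * U2 r / r = 0) :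
    ∀ r ∈ Icc r0 r1,
      HasDerivWithinAt (fun s => (M1 s) ^ 2)
        ((M1 r) ^ 2 * (2 + (γ - 1) * (M1 r) ^ 2 + (γ + 1) * (M2 r) ^ 2)
          / (r * ((M1 r) ^ 2 - 1))) (Icc r0 r1) r ∧
      HasDerivWithinAt (fun s => (M2 s) ^ 2)
        ((M2 r) ^ 2 * (2 + (γ - 3) * (M1 r) ^ 2 + (γ - 1) * (M2 r) ^ 2)
          / (r * ((M1 r) ^ 2 - 1))) (Icc r0 r1) r ∧
      HasDerivWithinAt (fun s => (M1 s) ^ 2 + (M2 s) ^ 2)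
        (((M1 r) ^ 2 + (M2 r) ^ 2) * (2 + (γ - 1) * ((M1 r) ^ 2 + (M2 r) ^ 2))
          / (r * ((M1 r) ^ 2 - 1))) (Icc r0 r1) r := fun r hr =>
  mach_number_odes_general
    ⟨hρ r hr, hU1 r hr, hU2 r hr, heq1 r hr, heq2 r hr, heq3 r hr⟩
    (mul_pos hA0 (one_pos.trans hγ)) (hr0.trans_le hr.1).ne' (hρpos r hr) (hU1ne r hr)
    hc hM1 hM2 (hsub r hr).ne
end

section
/- Let γ > 1, A0 > 0 and 0 < r0 < r1. Suppose ρ, U1, U2 : [r0, r1] → ℝ are differentiable with ρ(r) > 0 and M1(r)² < 1 for all r, and that they satisfy the background derivative relations ρ'(r) = (M1² + M2²)ρ/(r(1−M1²)), U1'(r) = −(1+M2²)U1/(r(1−M1²)), U2'(r) = −U2/r. Define A_{b11}(r) = c(r)² − U1(r)², e1(r) = (c² + U2²)/r + (γ+1)(1+M2²)U1²/(r(1−M1²)) − (γ−1)U1²/r, and e2(r) = (2(1−M1²) + (γ−1)(M1²+M2²)) U1 U2 / ((1−M1²) r²). Let f : [r0, r1] → ℝ be twice differentiable with f'(r) = M1(r)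 M2(r) / (r(1 − M1(r)²)). Then k_{b2}(r) := f''(r) + (e1(r) f'(r) + e2(r)) / A_{b11}(r) = 0 for every r ∈ [r0, r1]. -/
open Real Set

/-!
Everything is computed with relative rates `u' / u`. Let `α = ρ' / ρ`. Then the rates of `U1`, `U2`
and `c` are `-(1/r + α)`, `-1/r` and `(γ - 1) α / 2`, so the rates of `M1`, `M2`, and hence the rate
of `f' = M1 M2 / (r (1 - M1²))`, are explicit affine functions of `1/r` and `α`, apart from the
term `q = M1² (2/r + (γ + 1) α) / (1 - M1²)` that comes from differentiating `1 - M1²`: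

* `f'' / f' = -(3/r + γ α) - q`,
* `e1 / Ab11 = (1/r + α) + q`,
* `e2 / Ab11 = (2/r + (γ - 1) α) f'`.

The three contributions cancel.
-/

/-- `u` has relative rate of change `a` at `x` within `s`. This is the logarithmic derivative,
written without division so that it also makes sense where `u` vanishes (e.g. for a flow
without swirl). -/
def HasRelDerivWithinAt {𝕜 : Type*} [NontriviallyNormedField 𝕜]
    (u : 𝕜 → 𝕜) (a : 𝕜) (s : Set 𝕜) (x : 𝕜) : Prop :=
  HasDerivWithinAt u (a * u x) s x

namespace HasRelDerivWithinAt

section Field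

variable {𝕜 : Type*} [NontriviallyNormedField 𝕜] {u v : 𝕜 → 𝕜} {a b x : 𝕜} {s : Set 𝕜}

theorem id (hx : x ≠ 0) : HasRelDerivWithinAt (fun y => y) x⁻¹ s x :=
  (hasDerivWithinAt_id x s).congr_deriv (inv_mul_cancel₀ hx).symm

theorem const_mul (k : 𝕜) (hu : HasRelDerivWithinAt u a s x) :
    HasRelDerivWithinAt (fun y => k * u y) a s x :=
  (HasDerivWithinAt.const_mul k hu).congr_deriv (mul_left_comm _ _ _)

theorem mul (hu : HasRelDerivWithinAt u a s x) (hv : HasRelDerivWithinAt v b s x) :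
    HasRelDerivWithinAt (fun y => u y * v y) (a + b) s x :=
  (HasDerivWithinAt.fun_mul hu hv).congr_deriv (by ring)

theorem div (hu : HasRelDerivWithinAt u a s x) (hv : HasRelDerivWithinAt v b s x)
    (hvx : v x ≠ 0) : HasRelDerivWithinAt (fun y => u y / v y) (a - b) s x :=
  (HasDerivWithinAt.fun_div hu hv hvx).congr_deriv (by field_simp)

theorem one_sub_sq (hu : HasRelDerivWithinAt u a s x) (hux : 1 - u x ^ 2 ≠ 0) :
    HasRelDerivWithinAt (fun y => 1 - u y ^ 2) (-(2 * a * u x ^ 2) / (1 - u x ^ 2)) s x :=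
  ((HasDerivWithinAt.fun_pow hu 2).const_sub 1).congr_deriv (by field_simp; push_cast; ring)

end Field

theorem rpow_const {u : ℝ → ℝ} {a x : ℝ} {s : Set ℝ} (p : ℝ)
    (hu : HasRelDerivWithinAt u a s x) (hux : u x ≠ 0) :
    HasRelDerivWithinAt (fun y => u y ^ p) (p * a) s x :=
  (HasDerivWithinAt.rpow_const hu (Or.inl hux)).congr_deriv (by
    rw [rpow_sub_one hux]
    field_simp)

end HasRelDerivWithinAt

section DensityRate

variable {K : Type*} [Field K] {r m n : K}

/-- The relative rate `ρ' / ρ` of the density of the background flow at radius `r`, where the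
radial and angular Mach numbers are `m` and `n`. -/
def densityRate (r m n : K) : K := (m ^ 2 + n ^ 2) / (r * (1 - m ^ 2))

theorem inv_add_densityRate (n : K) (hr : r ≠ 0) (hm : 1 - m ^ 2 ≠ 0) :
    r⁻¹ + densityRate r m n = (1 + n ^ 2) / (r * (1 - m ^ 2)) := by
  unfold densityRate
  field_simp
  ring

theorem e1_div_Ab11 {c : K} (γ n : K) (hc : c ≠ 0) (hr : r ≠ 0) (hm : 1 - m ^ 2 ≠ 0) :
    ((c ^ 2 + (n * c) ^ 2) / r + (γ + 1) * (1 + n ^ 2) * (m * c) ^ 2 / (r * (1 - m ^ 2))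
        - (γ - 1) * (m * c) ^ 2 / r) / (c ^ 2 - (m * c) ^ 2)
      = r⁻¹ + densityRate r m n
        + m ^ 2 * (2 * r⁻¹ + (γ + 1) * densityRate r m n) / (1 - m ^ 2) := by
  have hA : c ^ 2 - (m * c) ^ 2 = c ^ 2 * (1 - m ^ 2) := by ring
  rw [hA, densityRate]
  field_simp
  ring

theorem e2_div_Ab11 {c : K} (γ n : K) (hc : c ≠ 0) (hr : r ≠ 0) (hm : 1 - m ^ 2 ≠ 0) :
    (2 * (1 - m ^ 2) + (γ - 1) * (m ^ 2 + n ^ 2)) * (m * c * (n * c)) / ((1 - m ^ 2) * r ^ 2)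
        / (c ^ 2 - (m * c) ^ 2)
      = (2 * r⁻¹ + (γ - 1) * densityRate r m n) * (m * n / (r * (1 - m ^ 2))) := by
  have hA : c ^ 2 - (m * c) ^ 2 = c ^ 2 * (1 - m ^ 2) := by ring
  rw [hA, densityRate]
  field_simp

end DensityRate

theorem hasRelDerivWithinAt_mach_mul_mach_div {γ α r : ℝ} {s : Set ℝ} {M1 M2 : ℝ → ℝ}
    (hM1 : HasRelDerivWithinAt M1 (-(r⁻¹ + α) - (γ - 1) / 2 * α) s r)
    (hM2 : HasRelDerivWithinAt M2 (-r⁻¹ - (γ - 1) / 2 * α) s r)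
    (hr : r ≠ 0) (hm : 1 - M1 r ^ 2 ≠ 0) :
    HasRelDerivWithinAt (fun x => M1 x * M2 x / (x * (1 - M1 x ^ 2)))
      (-(3 * r⁻¹ + γ * α) - M1 r ^ 2 * (2 * r⁻¹ + (γ + 1) * α) / (1 - M1 r ^ 2)) s r := by
  have quotient_rate :=
    (hM1.mul hM2).div ((HasRelDerivWithinAt.id hr).mul (hM1.one_sub_sq hm)) (mul_ne_zero hr hm)
  convert quotient_rate using 1
  ring

theorem kb2_vanishes_general
    (γ A0 : ℝ) (hγ : 0 < γ) (hA0 : 0 < A0)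
    (s : Set ℝ) (hs : UniqueDiffOn ℝ s) (hs0 : ∀ r ∈ s, r ≠ 0)
    (ρ U1 U2 c M1 M2 : ℝ → ℝ)
    (hc : ∀ r, c r = Real.sqrt (A0 * γ) * ρ r ^ ((γ - 1) / 2))
    (hM1 : ∀ r, M1 r = U1 r / c r) (hM2 : ∀ r, M2 r = U2 r / c r)
    (hρpos : ∀ r ∈ s, 0 < ρ r)
    (hsonic : ∀ r ∈ s, (M1 r) ^ 2 ≠ 1)
    (hρ' : ∀ r ∈ s, HasDerivWithinAt ρ
      (((M1 r) ^ 2 + (M2 r) ^ 2) * ρ r / (r * (1 - (M1 r) ^ 2))) s r)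
    (hU1' : ∀ r ∈ s, HasDerivWithinAt U1
      (-(1 + (M2 r) ^ 2) * U1 r / (r * (1 - (M1 r) ^ 2))) s r)
    (hU2' : ∀ r ∈ s, HasDerivWithinAt U2 (-U2 r / r) s r)
    (Ab11 e1 e2 : ℝ → ℝ)
    (hAb11 : ∀ r, Ab11 r = (c r) ^ 2 - (U1 r) ^ 2)
    (he1 : ∀ r, e1 r = ((c r) ^ 2 + (U2 r) ^ 2) / r
      + (γ + 1) * (1 + (M2 r) ^ 2) * (U1 r) ^ 2 / (r * (1 - (M1 r) ^ 2))
      - (γ - 1) * (U1 r) ^ 2 / r)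
    (he2 : ∀ r, e2 r = (2 * (1 - (M1 r) ^ 2) + (γ - 1) * ((M1 r) ^ 2 + (M2 r) ^ 2))
      * (U1 r * U2 r) / ((1 - (M1 r) ^ 2) * r ^ 2))
    (f f' f'' : ℝ → ℝ)
    (hf : ∀ r ∈ s, HasDerivWithinAt f (f' r) s r)
    (hfp : ∀ r ∈ s, f' r = M1 r * M2 r / (r * (1 - (M1 r) ^ 2)))
    (hf' : ∀ r ∈ s, HasDerivWithinAt f' (f'' r) s r) :
    ∀ r ∈ s, f'' r + (e1 r * f' r + e2 r) / Ab11 r = 0 := by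
  intro r hr
  have r_ne : r ≠ 0 := hs0 r hr
  have nonsonic : 1 - M1 r ^ 2 ≠ 0 := sub_ne_zero.2 (hsonic r hr).symm
  have c_ne : c r ≠ 0 := by
    rw [hc]
    exact (mul_pos (sqrt_pos.2 (mul_pos hA0 hγ)) (rpow_pos_of_pos (hρpos r hr) _)).ne'
  have U1_eq : U1 r = M1 r * c r := by rw [hM1, div_mul_cancel₀ _ c_ne]
  have U2_eq : U2 r = M2 r * c r := by rw [hM2, div_mul_cancel₀ _ c_ne]
  let α := densityRate r (M1 r) (M2 r)
  have ρ_rate : HasRelDerivWithinAt ρ α s r := (hρ' r hr).congr_deriv (mul_div_right_comm _ _ _)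
  have U1_rate : HasRelDerivWithinAt U1 (-(r⁻¹ + α)) s r :=
    (hU1' r hr).congr_deriv (by rw [inv_add_densityRate _ r_ne nonsonic]; ring)
  have U2_rate : HasRelDerivWithinAt U2 (-r⁻¹) s r := (hU2' r hr).congr_deriv (by ring)
  have c_rate : HasRelDerivWithinAt c ((γ - 1) / 2 * α) s r :=
    funext hc ▸ (ρ_rate.rpow_const _ (hρpos r hr).ne').const_mul _
  have M1_rate : HasRelDerivWithinAt M1 (-(r⁻¹ + α) - (γ - 1) / 2 * α) s r :=
    funext hM1 ▸ U1_rate.div c_rate c_ne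
  have M2_rate : HasRelDerivWithinAt M2 (-r⁻¹ - (γ - 1) / 2 * α) s r :=
    funext hM2 ▸ U2_rate.div c_rate c_ne
  let q := M1 r ^ 2 * (2 * r⁻¹ + (γ + 1) * α) / (1 - M1 r ^ 2)
  have f'_rate : HasRelDerivWithinAt f' (-(3 * r⁻¹ + γ * α) - q) s r := by
    have rate := hasRelDerivWithinAt_mach_mul_mach_div M1_rate M2_rate r_ne nonsonic
    exact (HasDerivWithinAt.congr rate hfp (hfp r hr)).congr_deriv (by rw [hfp r hr])
  have f''_eq : f'' r = (-(3 * r⁻¹ + γ * α) - q) * f' r := (hs r hr).eq_deriv _ (hf' r hr) f'_rate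
  have e1_eq : e1 r / Ab11 r = r⁻¹ + α + q := by
    rw [he1, hAb11, U1_eq, U2_eq, e1_div_Ab11 γ _ c_ne r_ne nonsonic]
  have e2_eq : e2 r / Ab11 r = (2 * r⁻¹ + (γ - 1) * α) * f' r := by
    rw [he2, hAb11, U1_eq, U2_eq, e2_div_Ab11 γ _ c_ne r_ne nonsonic, hfp r hr]
  rw [add_div, mul_div_right_comm, f''_eq, e1_eq, e2_eq]
  ring

/-- identity (2.1) of Proposition 2.1: for the background flow,
`k_{b2}(r) = f''(r) + (e1(r) f'(r) + e2(r)) / A_{b11}(r) ≡ 0` on `[r0, r1]`. -/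
theorem kb2_vanishes
    (γ A0 r0 r1 : ℝ) (hγ : 1 < γ) (hA0 : 0 < A0) (hr0 : 0 < r0) (hr01 : r0 < r1)
    (ρ U1 U2 c M1 M2 : ℝ → ℝ)
    (hc : ∀ r, c r = Real.sqrt (A0 * γ) * ρ r ^ ((γ - 1) / 2))
    (hM1 : ∀ r, M1 r = U1 r / c r) (hM2 : ∀ r, M2 r = U2 r / c r)
    (hρpos : ∀ r ∈ Icc r0 r1, 0 < ρ r)
    (hsub : ∀ r ∈ Icc r0 r1, (M1 r) ^ 2 < 1)
    (hρ' : ∀ r ∈ Icc r0 r1, HasDerivWithinAt ρ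
      (((M1 r) ^ 2 + (M2 r) ^ 2) * ρ r / (r * (1 - (M1 r) ^ 2))) (Icc r0 r1) r)
    (hU1' : ∀ r ∈ Icc r0 r1, HasDerivWithinAt U1
      (-(1 + (M2 r) ^ 2) * U1 r / (r * (1 - (M1 r) ^ 2))) (Icc r0 r1) r)
    (hU2' : ∀ r ∈ Icc r0 r1, HasDerivWithinAt U2 (-U2 r / r) (Icc r0 r1) r)
    (Ab11 e1 e2 : ℝ → ℝ)
    (hAb11 : ∀ r, Ab11 r = (c r) ^ 2 - (U1 r) ^ 2)
    (he1 : ∀ r, e1 r = ((c r) ^ 2 + (U2 r) ^ 2) / r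
      + (γ + 1) * (1 + (M2 r) ^ 2) * (U1 r) ^ 2 / (r * (1 - (M1 r) ^ 2))
      - (γ - 1) * (U1 r) ^ 2 / r)
    (he2 : ∀ r, e2 r = (2 * (1 - (M1 r) ^ 2) + (γ - 1) * ((M1 r) ^ 2 + (M2 r) ^ 2))
      * (U1 r * U2 r) / ((1 - (M1 r) ^ 2) * r ^ 2))
    (f f' f'' : ℝ → ℝ)
    (hf : ∀ r ∈ Icc r0 r1, HasDerivWithinAt f (f' r) (Icc r0 r1) r)
    (hfp : ∀ r ∈ Icc r0 r1, f' r = M1 r * M2 r / (r * (1 - (M1 r) ^ 2)))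
    (hf' : ∀ r ∈ Icc r0 r1, HasDerivWithinAt f' (f'' r) (Icc r0 r1) r) :
    ∀ r ∈ Icc r0 r1, f'' r + (e1 r * f' r + e2 r) / Ab11 r = 0 := by
  exact kb2_vanishes_general γ A0 (by linarith) hA0 (Icc r0 r1) (uniqueDiffOn_Icc hr01)
    (fun r hr => (hr0.trans_le hr.1).ne') ρ U1 U2 c M1 M2 hc hM1 hM2 hρpos
    (fun r hr => (hsub r hr).ne) hρ' hU1' hU2' Ab11 e1 e2 hAb11 he1 he2 f f' f'' hf hfp hf'
end

section
/- Let γ > 1 and 0 < r0 < r1. Suppose m1, m2 : [r0, r1] → ℝ are differentiable with 0 ≤ m1(r) < 1 for all r, and satisfy the Mach-number ODEs m1'(r) = m1 (2 + (γ−1)m1 + (γ+1)m2) / (r(m1 − 1)) and m2'(r) = m2 (2 + (γ−3)m1 + (γ−1)m2) / (r(m1 − 1)). Define k_{b1}(r) = (1 + m2 + 2m1 + (γ+1) m1 (m1 + m2)/(1 − m1)) / (r(1 − m1)) and k_{b22}(r) = (1 − m1 − m2) / (r²(1 − m1)²). Then for every r ∈ [r0, r1]: 2 k_{b1}(r) k_{b22}(r)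 + k_{b22}'(r) = (m1 + m2)(4 − (3−γ)(m1 + m2)) / (r³ (1 − m1)³). -/
open Real Set

/-!
Put `M = m1 + m2` and `w = r (1 - m1)`, so that `kb22 = (1 - M) / w ^ 2`. The two Mach-number
equations add up to an equation in which only `M` and `w` occur, `M' = -M (2 + (γ - 1) M) / w`,
and `kb1` is the function for which `w' = kb1 w - M`. The quotient rule then gives
`kb22' = M (2 + (γ - 1) M) / w ^ 3 - 2 (kb1 - M / w) kb22`, where the terms without `kb1` combine
to `M (4 - (3 - γ) M) / w ^ 3`.
-/

section MachNumbers

variable {𝕜 : Type*} [NontriviallyNormedField 𝕜] {γ r : 𝕜} {m1 m2 : 𝕜 → 𝕜} {s : Set 𝕜}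

theorem hasDerivWithinAt_sqMach_add
    (hm1' : HasDerivWithinAt m1
      (m1 r * (2 + (γ - 1) * m1 r + (γ + 1) * m2 r) / (r * (m1 r - 1))) s r)
    (hm2' : HasDerivWithinAt m2
      (m2 r * (2 + (γ - 3) * m1 r + (γ - 1) * m2 r) / (r * (m1 r - 1))) s r) :
    HasDerivWithinAt (fun x ↦ m1 x + m2 x)
      (-((m1 r + m2 r) * (2 + (γ - 1) * (m1 r + m2 r)) / (r * (1 - m1 r)))) s r := by
  refine (hm1'.fun_add hm2').congr_deriv ?_
  rw [← add_div, ← div_neg]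
  congr 1 <;> ring

theorem hasDerivWithinAt_id_mul_one_sub_sqMach (hr : r ≠ 0) (hm1 : m1 r ≠ 1)
    (hm1' : HasDerivWithinAt m1
      (m1 r * (2 + (γ - 1) * m1 r + (γ + 1) * m2 r) / (r * (m1 r - 1))) s r) :
    HasDerivWithinAt (fun x ↦ x * (1 - m1 x))
      ((1 + m2 r + 2 * m1 r + (γ + 1) * m1 r * (m1 r + m2 r) / (1 - m1 r)) / (r * (1 - m1 r))
        * (r * (1 - m1 r)) - (m1 r + m2 r)) s r := by
  have hsub : 1 - m1 r ≠ 0 := sub_ne_zero.mpr hm1.symm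
  refine ((hasDerivWithinAt_id r s).fun_mul (hm1'.const_sub 1)).congr_deriv ?_
  rw [div_mul_cancel₀ _ (mul_ne_zero hr hsub), ← neg_sub 1 (m1 r)]
  simp only [id]
  field_simp
  ring

theorem hasDerivWithinAt_one_sub_div_sq {M w : 𝕜 → 𝕜} {k : 𝕜} (hw : w r ≠ 0)
    (hM' : HasDerivWithinAt M (-(M r * (2 + (γ - 1) * M r) / w r)) s r)
    (hw' : HasDerivWithinAt w (k * w r - M r) s r) :
    HasDerivWithinAt (fun x ↦ (1 - M x) / w x ^ 2)
      (M r * (4 - (3 - γ) * M r) / w r ^ 3 - 2 * k * ((1 - M r) / w r ^ 2)) s r := by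
  refine ((hM'.const_sub 1).fun_div (hw'.fun_pow 2) (pow_ne_zero 2 hw)).congr_deriv ?_
  field_simp
  push_cast
  ring

theorem kb22_identity_general {kb1 kb22 : 𝕜 → 𝕜} (hr : r ≠ 0) (hm1 : m1 r ≠ 1)
    (hm1' : HasDerivWithinAt m1
      (m1 r * (2 + (γ - 1) * m1 r + (γ + 1) * m2 r) / (r * (m1 r - 1))) s r)
    (hm2' : HasDerivWithinAt m2
      (m2 r * (2 + (γ - 3) * m1 r + (γ - 1) * m2 r) / (r * (m1 r - 1))) s r)
    (hkb1 : kb1 r = (1 + m2 r + 2 * m1 r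
      + (γ + 1) * m1 r * (m1 r + m2 r) / (1 - m1 r)) / (r * (1 - m1 r)))
    (hkb22 : ∀ x, kb22 x = (1 - m1 x - m2 x) / (x ^ 2 * (1 - m1 x) ^ 2)) :
    HasDerivWithinAt kb22
      ((m1 r + m2 r) * (4 - (3 - γ) * (m1 r + m2 r)) / (r ^ 3 * (1 - m1 r) ^ 3)
        - 2 * kb1 r * kb22 r) s r := by
  have hw : r * (1 - m1 r) ≠ 0 := mul_ne_zero hr (sub_ne_zero.mpr hm1.symm)
  have hM' := hasDerivWithinAt_sqMach_add hm1' hm2'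
  have hw' := hasDerivWithinAt_id_mul_one_sub_sqMach hr hm1 hm1'
  rw [← hkb1] at hw'
  have hkb22_eq : kb22 = fun x ↦ (1 - (m1 x + m2 x)) / (x * (1 - m1 x)) ^ 2 := by
    funext x
    rw [hkb22, sub_sub, mul_pow]
  rw [hkb22_eq, ← mul_pow]
  exact hasDerivWithinAt_one_sub_div_sq hw hM' hw'

end MachNumbers

/-- identity (2.2) of Proposition 2.1: for the squared Mach numbers
`m1, m2` of the background flow, `2 k_{b1} k_{b22} + k_{b22}'
= (m1+m2)(4 − (3−γ)(m1+m2)) / (r³(1−m1)³)`. -/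
theorem kb22_identity
    (γ r0 r1 : ℝ) (hγ : 1 < γ) (hr0 : 0 < r0) (hr01 : r0 < r1)
    (m1 m2 : ℝ → ℝ)
    (hm1range : ∀ r ∈ Icc r0 r1, 0 ≤ m1 r ∧ m1 r < 1)
    (hm1' : ∀ r ∈ Icc r0 r1, HasDerivWithinAt m1
      (m1 r * (2 + (γ - 1) * m1 r + (γ + 1) * m2 r) / (r * (m1 r - 1))) (Icc r0 r1) r)
    (hm2' : ∀ r ∈ Icc r0 r1, HasDerivWithinAt m2
      (m2 r * (2 + (γ - 3) * m1 r + (γ - 1) * m2 r) / (r * (m1 r - 1))) (Icc r0 r1) r)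
    (kb1 kb22 : ℝ → ℝ)
    (hkb1 : ∀ r, kb1 r = (1 + m2 r + 2 * m1 r
      + (γ + 1) * m1 r * (m1 r + m2 r) / (1 - m1 r)) / (r * (1 - m1 r)))
    (hkb22 : ∀ r, kb22 r = (1 - m1 r - m2 r) / (r ^ 2 * (1 - m1 r) ^ 2)) :
    ∀ r ∈ Icc r0 r1, HasDerivWithinAt kb22
      ((m1 r + m2 r) * (4 - (3 - γ) * (m1 r + m2 r)) / (r ^ 3 * (1 - m1 r) ^ 3)
        - 2 * kb1 r * kb22 r) (Icc r0 r1) r :=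
  fun r hr ↦ kb22_identity_general (hr0.trans_le hr.1).ne' (hm1range r hr).2.ne
    (hm1' r hr) (hm2' r hr) (hkb1 r) hkb22
end

section
/- Let γ ≥ 1 and 0 < r0 < r1. Suppose m1, m2 : [r0, r1] → ℝ are differentiable with 0 ≤ m1(r) < 1 and m2(r) ≥ 0 for all r, and satisfy the Mach-number ODEs m1'(r) = m1 (2 + (γ−1)m1 + (γ+1)m2) / (r(m1 − 1)) and m2'(r) = m2 (2 + (γ−3)m1 + (γ−1)m2) / (r(m1 − 1)). Define k_{b1}(r) = (1 + m2 + 2m1 + (γ+1) m1 (m1 + m2)/(1 − m1)) / (r(1 − m1)) and k_{b33}(r) = 1/(1 − m1(r)). Then for every r ∈ [r0, r1]: 2 k_{b1}(r) k_{b33}(r) + k_{b33}'(r) = (2 + 2 m2 + (γ−1) m1 (m1 + m2)) / (r (1 − m1)³), and this quantity is strictly positive. -/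
open Real Set

/-!
By the equation for `m₁'`, `k_{b33}' = m₁' / (1 - m₁)²` is a rational function of `r`, `m₁`, `m₂`
with denominator `-r (1 - m₁)³`, so the identity is purely algebraic. The resulting numerator equals
`2 (1 - m₁) (1 + m₁ + m₂) + (γ + 1) m₁ (m₁ + m₂)`, whose first term is positive and whose second is
nonnegative when `γ ≥ -1`.
-/

theorem hasDerivWithinAt_one_div_one_sub {𝕜 : Type*} [NontriviallyNormedField 𝕜]
    {f : 𝕜 → 𝕜} {f' x : 𝕜} {s : Set 𝕜} (hf : HasDerivWithinAt f f' s x) (hx : f x ≠ 1) :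
    HasDerivWithinAt (fun y => 1 / (1 - f y)) (f' / (1 - f x) ^ 2) s x := by
  simpa only [one_div, neg_neg] using (hf.const_sub 1).fun_inv (sub_ne_zero.mpr hx.symm)

theorem two_mul_kb1_mul_kb33_add_deriv_eq {K : Type*} [Field K] {γ r m₁ m₂ : K}
    (hm₁ : m₁ ≠ 1) :
    2 * ((1 + m₂ + 2 * m₁ + (γ + 1) * m₁ * (m₁ + m₂) / (1 - m₁)) / (r * (1 - m₁)))
          * (1 / (1 - m₁))
        + m₁ * (2 + (γ - 1) * m₁ + (γ + 1) * m₂) / (r * (m₁ - 1)) / (1 - m₁) ^ 2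
      = (2 + 2 * m₂ + (γ - 1) * m₁ * (m₁ + m₂)) / (r * (1 - m₁) ^ 3) := by
  have hsub : 1 - m₁ ≠ 0 := sub_ne_zero.mpr hm₁.symm
  have hkb1 : 2 * ((1 + m₂ + 2 * m₁ + (γ + 1) * m₁ * (m₁ + m₂) / (1 - m₁)) / (r * (1 - m₁)))
        * (1 / (1 - m₁))
      = 2 * ((1 + m₂ + 2 * m₁) * (1 - m₁) + (γ + 1) * m₁ * (m₁ + m₂)) / (r * (1 - m₁) ^ 3) := by
    field_simp
  have hderiv : m₁ * (2 + (γ - 1) * m₁ + (γ + 1) * m₂) / (r * (m₁ - 1)) / (1 - m₁) ^ 2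
      = -(m₁ * (2 + (γ - 1) * m₁ + (γ + 1) * m₂)) / (r * (1 - m₁) ^ 3) := by
    rw [← neg_sub 1 m₁, mul_neg, div_neg, neg_div, neg_div, div_div, mul_assoc, ← pow_succ']
  rw [hkb1, hderiv, ← add_div]
  congr 1
  ring

theorem kb33_numerator_pos {R : Type*} [CommRing R] [PartialOrder R] [IsStrictOrderedRing R]
    {γ m₁ m₂ : R} (hγ : -1 ≤ γ) (hm₁ : 0 ≤ m₁) (hm₁_lt : m₁ < 1) (hm₂ : 0 ≤ m₂) :
    0 < 2 + 2 * m₂ + (γ - 1) * m₁ * (m₁ + m₂) := by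
  have hfirst : 0 < 2 * (1 - m₁) * (1 + m₁ + m₂) :=
    mul_pos (mul_pos two_pos (sub_pos.mpr hm₁_lt)) (by positivity)
  have hsecond : 0 ≤ (γ + 1) * m₁ * (m₁ + m₂) :=
    mul_nonneg (mul_nonneg (neg_le_iff_add_nonneg.mp hγ) hm₁) (add_nonneg hm₁ hm₂)
  calc 0 < 2 * (1 - m₁) * (1 + m₁ + m₂) + (γ + 1) * m₁ * (m₁ + m₂) :=
        add_pos_of_pos_of_nonneg hfirst hsecond
    _ = 2 + 2 * m₂ + (γ - 1) * m₁ * (m₁ + m₂) := by ring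

theorem kb33_identity_general {γ : ℝ} (hγ : -1 ≤ γ) {s : Set ℝ} (hs : ∀ r ∈ s, 0 < r)
    {m1 m2 : ℝ → ℝ}
    (hm1range : ∀ r ∈ s, 0 ≤ m1 r ∧ m1 r < 1)
    (hm2nonneg : ∀ r ∈ s, 0 ≤ m2 r)
    (hm1' : ∀ r ∈ s, HasDerivWithinAt m1
      (m1 r * (2 + (γ - 1) * m1 r + (γ + 1) * m2 r) / (r * (m1 r - 1))) s r)
    {kb1 kb33 : ℝ → ℝ}
    (hkb1 : ∀ r ∈ s, kb1 r = (1 + m2 r + 2 * m1 r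
      + (γ + 1) * m1 r * (m1 r + m2 r) / (1 - m1 r)) / (r * (1 - m1 r)))
    (hkb33 : ∀ r ∈ s, kb33 r = 1 / (1 - m1 r)) :
    ∀ r ∈ s,
      HasDerivWithinAt kb33
        ((2 + 2 * m2 r + (γ - 1) * m1 r * (m1 r + m2 r)) / (r * (1 - m1 r) ^ 3)
          - 2 * kb1 r * kb33 r) s r ∧
      0 < (2 + 2 * m2 r + (γ - 1) * m1 r * (m1 r + m2 r)) / (r * (1 - m1 r) ^ 3) := by
  intro r hr
  obtain ⟨hm1_nonneg, hm1_lt⟩ := hm1range r hr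
  constructor
  · rw [← two_mul_kb1_mul_kb33_add_deriv_eq hm1_lt.ne, ← hkb1 r hr, ← hkb33 r hr,
      add_sub_cancel_left]
    exact (hasDerivWithinAt_one_div_one_sub (hm1' r hr) hm1_lt.ne).congr_of_mem hkb33 hr
  · exact div_pos (kb33_numerator_pos hγ hm1_nonneg hm1_lt (hm2nonneg r hr))
      (mul_pos (hs r hr) (pow_pos (sub_pos.mpr hm1_lt) 3))

/-- identity (2.3) of Proposition 2.1: for the squared Mach numbers
`m1, m2` of the background flow, `2 k_{b1} k_{b33} + k_{b33}'
= (2 + 2m2 + (γ−1)m1(m1+m2)) / (r(1−m1)³) > 0`. -/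
theorem kb33_identity
    (γ r0 r1 : ℝ) (hγ : 1 ≤ γ) (hr0 : 0 < r0) (hr01 : r0 < r1)
    (m1 m2 : ℝ → ℝ)
    (hm1range : ∀ r ∈ Icc r0 r1, 0 ≤ m1 r ∧ m1 r < 1)
    (hm2nonneg : ∀ r ∈ Icc r0 r1, 0 ≤ m2 r)
    (hm1' : ∀ r ∈ Icc r0 r1, HasDerivWithinAt m1
      (m1 r * (2 + (γ - 1) * m1 r + (γ + 1) * m2 r) / (r * (m1 r - 1))) (Icc r0 r1) r)
    (hm2' : ∀ r ∈ Icc r0 r1, HasDerivWithinAt m2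
      (m2 r * (2 + (γ - 3) * m1 r + (γ - 1) * m2 r) / (r * (m1 r - 1))) (Icc r0 r1) r)
    (kb1 kb33 : ℝ → ℝ)
    (hkb1 : ∀ r, kb1 r = (1 + m2 r + 2 * m1 r
      + (γ + 1) * m1 r * (m1 r + m2 r) / (1 - m1 r)) / (r * (1 - m1 r)))
    (hkb33 : ∀ r, kb33 r = 1 / (1 - m1 r)) :
    ∀ r ∈ Icc r0 r1,
      HasDerivWithinAt kb33
        ((2 + 2 * m2 r + (γ - 1) * m1 r * (m1 r + m2 r)) / (r * (1 - m1 r) ^ 3)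
          - 2 * kb1 r * kb33 r) (Icc r0 r1) r ∧
      0 < (2 + 2 * m2 r + (γ - 1) * m1 r * (m1 r + m2 r)) / (r * (1 - m1 r) ^ 3) := by
  exact kb33_identity_general (by linarith) (fun r hr => hr0.trans_le hr.1) hm1range hm2nonneg hm1'
    (fun r _ => hkb1 r) (fun r _ => hkb33 r)
end

section
/- Let r0 < r1, let k1 : [r0, r1] → ℝ be continuous, and let k22 : [r0, r1] → ℝ be continuously differentiable with 2 k1(y) k22(y) + k22'(y) ≥ c0 for all y ∈ [r0, r1], for some constant c0 > 0. For each σ1 ∈ (0, 1/2] let l1^{σ1} be the function defined by l1^{σ1}(y) = exp(∫_{r0}^{y} 2k1(τ)dτ) · (1 + 2∫_{r0}^{r1} exp(−∫_{r0}^{t} 2k1) dt − 2σ1 ∫_{r0}^{y} exp(−∫_{r0}^{t} 2k1) dt). Then there exist constants σ2 ∈ (0, 1/2] and σ3 > 0 such that for every σ1 ∈ (0, σ2] and every y ∈ [r0, r1], (l1^{σ1} · k22)'(y) ≥ σ3. -/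
open Real Set

/-!
The multiplier `l = l1 σ1` solves the linear equation `l' = 2 k1 l - 2 σ1`, so
`(l k22)' = l (2 k1 k22 + k22') - 2 σ1 k22`. At `σ1 = 0` the multiplier is a positive multiple of an
exponential, so by compactness it stays above some `m > 0` on the interval for all small `σ1`.
The first term is then at least `m c0`, while the second is uniformly small.
-/

open Filter Topology

theorem eventually_forall_norm_smul_le_of_isCompact {X 𝕜 E : Type*} [TopologicalSpace X]
    [NormedField 𝕜] [SeminormedAddCommGroup E] [NormedSpace 𝕜 E] {K : Set X} (hK : IsCompact K)
    {f : X → E} (hf : ContinuousOn f K) {ε : ℝ} (hε : 0 < ε) :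
    ∀ᶠ s in 𝓝 (0 : 𝕜), ∀ x ∈ K, ‖s • f x‖ ≤ ε := by
  obtain ⟨M, hM⟩ := hK.exists_bound_of_continuousOn hf
  have tendsto_zero : Tendsto (fun s : 𝕜 => ‖s‖ * M) (𝓝 0) (𝓝 0) := by
    simpa using (tendsto_norm_zero (E := 𝕜)).mul_const M
  filter_upwards [tendsto_zero.eventually_le_const hε] with s hs x hx
  calc ‖s • f x‖ = ‖s‖ * ‖f x‖ := norm_smul s (f x)
    _ ≤ ‖s‖ * M := by gcongr; exact hM x hx
    _ ≤ ε := hs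

section Primitive

variable {E : Type*} [NormedAddCommGroup E] [NormedSpace ℝ E] [CompleteSpace E]
  {a b : ℝ} {f : ℝ → E}

theorem hasDerivWithinAt_integral_Icc {y : ℝ} (hf : ContinuousOn f (Icc a b)) (hy : y ∈ Icc a b) :
    HasDerivWithinAt (fun x => ∫ t in a..x, f t) (f y) (Icc a b) y := by
  have : Fact (y ∈ Icc a b) := ⟨hy⟩
  exact intervalIntegral.integral_hasDerivWithinAt_right
    ((hf.mono (Icc_subset_Icc_right hy.2)).intervalIntegrable_of_Icc hy.1)
    (hf.stronglyMeasurableAtFilter_nhdsWithin measurableSet_Icc y) (hf y hy)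

theorem continuousOn_integral_Icc (hf : ContinuousOn f (Icc a b)) :
    ContinuousOn (fun y => ∫ t in a..y, f t) (Icc a b) :=
  HasDerivWithinAt.continuousOn fun _ hy => hasDerivWithinAt_integral_Icc hf hy

end Primitive

/-- The solution of the linear initial value problem `l' = p l - s`, `l a = C`, with constant
source `s`, as given by variation of constants. The multiplier `l1 σ1` is the case `p = 2 k1`,
`a = r0`, `s = 2 σ1`, `C = 1 + 2 ∫ t in r0..r1, exp (-∫ τ in r0..t, 2 * k1 τ)`. -/
noncomputable def linearODESolution (p : ℝ → ℝ) (a C s y : ℝ) : ℝ :=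
  exp (∫ τ in a..y, p τ) * (C - s * ∫ t in a..y, exp (-∫ τ in a..t, p τ))

section LinearODE

variable {p : ℝ → ℝ} {a b : ℝ}

theorem hasDerivWithinAt_linearODESolution (hp : ContinuousOn p (Icc a b)) (C s : ℝ) {y : ℝ}
    (hy : y ∈ Icc a b) :
    HasDerivWithinAt (linearODESolution p a C s) (p y * linearODESolution p a C s y - s)
      (Icc a b) y := by
  have deriv_outer := (hasDerivWithinAt_integral_Icc hp hy).exp
  have deriv_inner :=
    ((hasDerivWithinAt_integral_Icc (continuousOn_integral_Icc hp).neg.rexp hy).const_mul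
      s).const_sub C
  refine (deriv_outer.mul deriv_inner).congr_deriv ?_
  have exp_cancel : exp (∫ τ in a..y, p τ) * exp (-∫ τ in a..y, p τ) = 1 := by
    rw [← exp_add, add_neg_cancel, exp_zero]
  simp only [linearODESolution, Pi.neg_apply]
  linear_combination -s * exp_cancel

theorem hasDerivWithinAt_linearODESolution_mul (hp : ContinuousOn p (Icc a b)) (C s : ℝ)
    {k : ℝ → ℝ} {k' y : ℝ} (hk : HasDerivWithinAt k k' (Icc a b) y) (hy : y ∈ Icc a b) :
    HasDerivWithinAt (fun t => linearODESolution p a C s t * k t)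
      (linearODESolution p a C s y * (p y * k y + k') - s * k y) (Icc a b) y :=
  ((hasDerivWithinAt_linearODESolution hp C s hy).mul hk).congr_deriv (by ring)

theorem exists_pos_eventually_forall_le_linearODESolution (hp : ContinuousOn p (Icc a b))
    {C : ℝ} (hC : 0 < C) :
    ∃ m > 0, ∀ᶠ s in 𝓝 0, ∀ y ∈ Icc a b, m ≤ linearODESolution p a C s y := by
  obtain ⟨e, he, hexp⟩ := isCompact_Icc.exists_forall_le' (continuousOn_integral_Icc hp).rexp
    fun y _ => exp_pos (∫ τ in a..y, p τ)
  refine ⟨e * (C / 2), by positivity, ?_⟩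
  filter_upwards [eventually_forall_norm_smul_le_of_isCompact isCompact_Icc
    (continuousOn_integral_Icc (continuousOn_integral_Icc hp).neg.rexp) (half_pos hC)]
    with s hs y hy
  have source_le : s * ∫ t in a..y, exp (-∫ τ in a..t, p τ) ≤ C / 2 :=
    (le_abs_self _).trans (hs y hy)
  exact mul_le_mul (hexp y hy) (by linarith) (by positivity) (exp_pos _).le

theorem multiplier_product_positive_general (hp : ContinuousOn p (Icc a b))
    {C : ℝ} (hC : 0 < C)
    {k k' : ℝ → ℝ} (hk : ∀ y ∈ Icc a b, HasDerivWithinAt k (k' y) (Icc a b) y)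
    {c : ℝ} (hc : 0 < c) (hpos : ∀ y ∈ Icc a b, c ≤ p y * k y + k' y) :
    ∃ μ > 0, ∀ᶠ s in 𝓝 0, ∀ y ∈ Icc a b,
      ∃ d, HasDerivWithinAt (fun t => linearODESolution p a C s t * k t) d (Icc a b) y ∧ μ ≤ d := by
  obtain ⟨m, hm, hl⟩ := exists_pos_eventually_forall_le_linearODESolution hp hC
  have hmc : 0 < m * c := mul_pos hm hc
  refine ⟨m * c / 2, half_pos hmc, ?_⟩
  filter_upwards [hl, eventually_forall_norm_smul_le_of_isCompact isCompact_Icc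
    (HasDerivWithinAt.continuousOn hk) (half_pos hmc)] with s hl hsk y hy
  refine ⟨_, hasDerivWithinAt_linearODESolution_mul hp C s (hk y hy) hy, ?_⟩
  have main_term : m * c ≤ linearODESolution p a C s y * (p y * k y + k' y) :=
    mul_le_mul (hl y hy) (hpos y hy) hc.le (hm.le.trans (hl y hy))
  have source_term : s * k y ≤ m * c / 2 := (le_abs_self _).trans (hsk y hy)
  linarith

end LinearODE

/-- if `2 k1 k22 + k22' ≥ c0 > 0` on `[r0, r1]`, then for all sufficiently
small `σ1 > 0` the product `l1^{σ1} · k22` has derivative bounded below by some `σ3 > 0`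
on `[r0, r1]`, where `l1^{σ1}` is the explicit multiplier. -/
theorem multiplier_product_positive
    (r0 r1 c0 : ℝ) (hr : r0 < r1) (hc0 : 0 < c0)
    (k1 : ℝ → ℝ) (hk1 : ContinuousOn k1 (Icc r0 r1))
    (k22 k22' : ℝ → ℝ)
    (hk22 : ∀ y ∈ Icc r0 r1, HasDerivWithinAt k22 (k22' y) (Icc r0 r1) y)
    (hk22'c : ContinuousOn k22' (Icc r0 r1))
    (hpos : ∀ y ∈ Icc r0 r1, c0 ≤ 2 * k1 y * k22 y + k22' y)
    (l1 : ℝ → ℝ → ℝ)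
    (hl1 : ∀ σ1 y : ℝ, l1 σ1 y = Real.exp (∫ τ in r0..y, 2 * k1 τ) *
      ((1 + 2 * ∫ t in r0..r1, Real.exp (-∫ τ in r0..t, 2 * k1 τ))
        - 2 * σ1 * ∫ t in r0..y, Real.exp (-∫ τ in r0..t, 2 * k1 τ))) :
    ∃ σ2, 0 < σ2 ∧ σ2 ≤ 1 / 2 ∧ ∃ σ3 > 0, ∀ σ1, 0 < σ1 → σ1 ≤ σ2 →
      ∀ y ∈ Icc r0 r1, ∃ d, HasDerivWithinAt (fun t => l1 σ1 t * k22 t) d (Icc r0 r1) y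
        ∧ σ3 ≤ d := by
  have initial_pos : 0 < 1 + 2 * ∫ t in r0..r1, exp (-∫ τ in r0..t, 2 * k1 τ) := by
    have integral_nonneg : 0 ≤ ∫ t in r0..r1, exp (-∫ τ in r0..t, 2 * k1 τ) :=
      intervalIntegral.integral_nonneg_of_forall hr.le fun t => (exp_pos _).le
    positivity
  obtain ⟨σ3, hσ3, h⟩ :=
    multiplier_product_positive_general (hk1.const_mul 2) initial_pos hk22 hc0 hpos
  obtain ⟨δ, hδ, h⟩ := Metric.nhds_basis_closedBall.eventually_iff.mp h
  refine ⟨min (1 / 2) (δ / 2), by positivity, min_le_left _ _, σ3, hσ3, fun σ1 hσ1 hle y hy => ?_⟩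
  have source_mem : 2 * σ1 ∈ Metric.closedBall 0 δ := by
    rw [mem_closedBall_zero_iff, norm_of_nonneg (by positivity)]
    linarith [hle.trans (min_le_right _ _)]
  simpa only [hl1, linearODESolution] using h source_mem y hy
end

section
/- Let 0 < r0 < r1 and let A11, A33, e1 : [r0, r1] → ℝ be continuous with A11(r) > 0, A33(r) > 0 and e1(r) > 0 for all r ∈ [r0, r1]. Let c ∈ ℝ and let ψ : [r0, r1] × ℝ → ℝ be bounded and continuous, twice continuously differentiable on [r0, r1) × ℝ, satisfying A11(r) ∂_r²ψ + A33(r) ∂_{x3}²ψ + e1(r) ∂_rψ = 0 on (r0, r1) × ℝ, ∂_rψ(r0, x3) = 0 for all x3 ∈ ℝ, and ψ(r1, x3) = c for all x3 ∈ ℝ. Then ψ(r, x3) = c for all (r, x3) ∈ [r0, r1] × ℝ. -/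
open Real Set

/-!
For `η > 0` the barrier `c + η (x² + μ (r₁ - r))` is a strict supersolution as soon as
`2 A₃₃ < μ e₁`, its derivative at `r = r₀` is negative, it is at least `c` at `r = r₁`, and it
outgrows every bounded function as `|x| → ∞`. Hence `ψ` minus the barrier, restricted to a
long rectangle, cannot have a positive maximum: neither inside, by the first and second derivative
tests, nor on any of the four sides. So `ψ` lies below the barrier, and `η → 0` gives `ψ ≤ c`. The
same bound for `-ψ` gives equality.
-/

open Filter Bornology Function
open scoped Topology

/-- The function `f` is differentiable near `x`, with first derivative `f'` and second derivative
`f''` at `x`. -/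
def HasDerivTwiceAt (f : ℝ → ℝ) (f' f'' x : ℝ) : Prop :=
  ∃ g : ℝ → ℝ, (∀ᶠ y in 𝓝 x, HasDerivAt f (g y) y) ∧ g x = f' ∧ HasDerivAt g f'' x

namespace HasDerivTwiceAt

variable {f g : ℝ → ℝ} {f' f'' g' g'' x : ℝ}

theorem hasDerivAt (hf : HasDerivTwiceAt f f' f'' x) : HasDerivAt f f' x := by
  obtain ⟨df, hdf, rfl, -⟩ := hf
  exact hdf.self_of_nhds

theorem neg (hf : HasDerivTwiceAt f f' f'' x) :
    HasDerivTwiceAt (fun y => -f y) (-f') (-f'') x := by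
  obtain ⟨df, hdf, rfl, hddf⟩ := hf
  exact ⟨fun y => -df y, hdf.mono fun _ h => h.neg, rfl, hddf.neg⟩

theorem sub (hf : HasDerivTwiceAt f f' f'' x) (hg : HasDerivTwiceAt g g' g'' x) :
    HasDerivTwiceAt (fun y => f y - g y) (f' - g') (f'' - g'') x := by
  obtain ⟨df, hdf, rfl, hddf⟩ := hf
  obtain ⟨dg, hdg, rfl, hddg⟩ := hg
  exact ⟨fun y => df y - dg y, hdf.mp (hdg.mono fun _ hg hf => hf.sub hg), rfl, hddf.sub hddg⟩

-- If `f''` were positive, `x` would also be a local minimum, so `f` would be constant near `x`.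
theorem second_deriv_nonpos_of_isLocalMax (hf : HasDerivTwiceAt f f' f'' x)
    (hmax : IsLocalMax f x) : f'' ≤ 0 := by
  have hf_x := hf.hasDerivAt
  obtain ⟨df, hdf, -, hddf⟩ := hf
  have hderiv : deriv f =ᶠ[𝓝 x] df := hdf.mono fun _ h => h.deriv
  have hderiv2 : deriv (deriv f) x = f'' := by rw [hderiv.deriv_eq, hddf.deriv]
  by_contra! hpos
  have hmin : IsLocalMin f x :=
    isLocalMin_of_deriv_deriv_pos (hderiv2 ▸ hpos) hmax.deriv_eq_zero hf_x.continuousAt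
  have hconst : f =ᶠ[𝓝 x] fun _ => f x := by
    filter_upwards [hmax, hmin] with y hle hge using le_antisymm hle hge
  have hzero : deriv (deriv f) x = 0 := by
    rw [hconst.deriv.deriv_eq]
    simp
  exact hpos.ne' (hderiv2 ▸ hzero)

end HasDerivTwiceAt

theorem deriv_nonpos_of_isMaxOn_Icc_left {f : ℝ → ℝ} {f' a b : ℝ} (hab : a < b)
    (hmax : IsMaxOn f (Icc a b) a) (hf : HasDerivWithinAt f f' (Icc a b) a) : f' ≤ 0 := by
  have hdir : b - a ∈ posTangentConeAt (Icc a b) a :=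
    sub_mem_posTangentConeAt_of_segment_subset (segment_eq_Icc hab.le).subset
  have h : (b - a) * f' ≤ 0 := by
    simpa using hmax.localize.hasFDerivWithinAt_nonpos hf.hasFDerivWithinAt hdir
  exact nonpos_of_mul_nonpos_right h (sub_pos.2 hab)

/-- The operator `a ∂_r² + b ∂_x² + e ∂_r` maps `u` to the value `v` at the point `(r, x)`. Since
only this point matters, the coefficients are numbers: their values there. -/
def HasStripOpAt (a b e : ℝ) (u : ℝ → ℝ → ℝ) (v r x : ℝ) : Prop :=
  ∃ ur urr ux uxx : ℝ, HasDerivTwiceAt (fun s => u s x) ur urr r ∧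
    HasDerivTwiceAt (fun t => u r t) ux uxx x ∧ a * urr + b * uxx + e * ur = v

namespace HasStripOpAt

variable {a b e v v' r x : ℝ} {u w : ℝ → ℝ → ℝ}

theorem neg (hu : HasStripOpAt a b e u v r x) :
    HasStripOpAt a b e (fun s t => -u s t) (-v) r x := by
  obtain ⟨ur, urr, ux, uxx, hur, hux, rfl⟩ := hu
  exact ⟨_, _, _, _, hur.neg, hux.neg, by ring⟩

theorem sub (hu : HasStripOpAt a b e u v r x) (hw : HasStripOpAt a b e w v' r x) :
    HasStripOpAt a b e (fun s t => u s t - w s t) (v - v') r x := by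
  obtain ⟨ur, urr, ux, uxx, hur, hux, rfl⟩ := hu
  obtain ⟨wr, wrr, wx, wxx, hwr, hwx, rfl⟩ := hw
  exact ⟨_, _, _, _, hur.sub hwr, hux.sub hwx, by ring⟩

theorem nonpos_of_isLocalMax (hu : HasStripOpAt a b e u v r x) (ha : 0 ≤ a) (hb : 0 ≤ b)
    (hmax : IsLocalMax (uncurry u) (r, x)) : v ≤ 0 := by
  obtain ⟨ur, urr, ux, uxx, hur, hux, rfl⟩ := hu
  have hmax_r : IsLocalMax (fun s => u s x) r :=
    hmax.comp_continuous (g := fun s => (s, x)) (by fun_prop)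
  have hmax_x : IsLocalMax (fun t => u r t) x :=
    hmax.comp_continuous (g := fun t => (r, t)) (by fun_prop)
  have hur_zero : ur = 0 := hmax_r.hasDerivAt_eq_zero hur.hasDerivAt
  have hurr : a * urr ≤ 0 :=
    mul_nonpos_of_nonneg_of_nonpos ha (hur.second_deriv_nonpos_of_isLocalMax hmax_r)
  have huxx : b * uxx ≤ 0 :=
    mul_nonpos_of_nonneg_of_nonpos hb (hux.second_deriv_nonpos_of_isLocalMax hmax_x)
  simpa [hur_zero] using add_nonpos hurr huxx

end HasStripOpAt

theorem nonpos_on_rectangle_of_strict_subsolution {r₀ r₁ x₀ x₁ : ℝ} {a b e w : ℝ → ℝ → ℝ}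
    (ha : ∀ r ∈ Ioo r₀ r₁, ∀ x ∈ Ioo x₀ x₁, 0 ≤ a r x)
    (hb : ∀ r ∈ Ioo r₀ r₁, ∀ x ∈ Ioo x₀ x₁, 0 ≤ b r x)
    (hcont : ContinuousOn (uncurry w) (Icc r₀ r₁ ×ˢ Icc x₀ x₁))
    (hop : ∀ r ∈ Ioo r₀ r₁, ∀ x ∈ Ioo x₀ x₁,
      ∃ v > 0, HasStripOpAt (a r x) (b r x) (e r x) w v r x)
    (hleft : ∀ x ∈ Ioo x₀ x₁, ∃ d > 0, HasDerivWithinAt (fun s => w s x) d (Icc r₀ r₁) r₀)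
    (hright : ∀ x ∈ Icc x₀ x₁, w r₁ x ≤ 0)
    (hbot : ∀ r ∈ Icc r₀ r₁, w r x₀ ≤ 0) (htop : ∀ r ∈ Icc r₀ r₁, w r x₁ ≤ 0) :
    ∀ r ∈ Icc r₀ r₁, ∀ x ∈ Icc x₀ x₁, w r x ≤ 0 := by
  intro r hr x hx
  obtain ⟨⟨p, q⟩, ⟨hp, hq⟩, hmax⟩ :=
    (isCompact_Icc.prod isCompact_Icc).exists_isMaxOn ⟨(r, x), hr, hx⟩ hcont
  refine (isMaxOn_iff.1 hmax (r, x) ⟨hr, hx⟩).trans (show w p q ≤ 0 from ?_)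
  by_contra! hpos
  have hp_lt : p < r₁ := hp.2.lt_of_ne fun h => (h ▸ hright q hq).not_gt hpos
  have hq_gt : x₀ < q := hq.1.lt_of_ne fun h => (h ▸ hbot p hp).not_gt hpos
  have hq_lt : q < x₁ := hq.2.lt_of_ne fun h => (h ▸ htop p hp).not_gt hpos
  have hp_gt : r₀ < p := by
    refine hp.1.lt_of_ne ?_
    rintro rfl
    obtain ⟨d, hd, hderiv⟩ := hleft q ⟨hq_gt, hq_lt⟩
    have hmax_r : IsMaxOn (fun s => w s q) (Icc r₀ r₁) r₀ :=
      fun s hs => isMaxOn_iff.1 hmax (s, q) ⟨hs, hq⟩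
    exact (deriv_nonpos_of_isMaxOn_Icc_left hp_lt hmax_r hderiv).not_gt hd
  have hp_Ioo : p ∈ Ioo r₀ r₁ := ⟨hp_gt, hp_lt⟩
  have hq_Ioo : q ∈ Ioo x₀ x₁ := ⟨hq_gt, hq_lt⟩
  obtain ⟨v, hv, hwv⟩ := hop p hp_Ioo q hq_Ioo
  have hlocal : IsLocalMax (uncurry w) (p, q) :=
    hmax.isLocalMax (prod_mem_nhds (Icc_mem_nhds hp_gt hp_lt) (Icc_mem_nhds hq_gt hq_lt))
  exact (hwv.nonpos_of_isLocalMax (ha p hp_Ioo q hq_Ioo) (hb p hp_Ioo q hq_Ioo) hlocal).not_gt hv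

/-- The barrier `c + η (x² + μ (r₁ - r))` of the maximum principle on the infinite strip. -/
def stripBarrier (c η μ r₁ r x : ℝ) : ℝ := c + η * (x ^ 2 + μ * (r₁ - r))

section Barrier

variable (c η μ r₁ : ℝ)

theorem continuous_stripBarrier : Continuous (uncurry (stripBarrier c η μ r₁)) := by
  unfold stripBarrier uncurry
  fun_prop

theorem hasDerivAt_stripBarrier_fst (r x : ℝ) :
    HasDerivAt (fun s => stripBarrier c η μ r₁ s x) (-(η * μ)) r := by
  have hlin := ((hasDerivAt_id r).const_sub r₁).const_mul μ
  have h := ((hlin.const_add (x ^ 2)).const_mul η).const_add c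
  exact h.congr_deriv (by ring)

theorem hasDerivAt_stripBarrier_snd (r x : ℝ) :
    HasDerivAt (fun t => stripBarrier c η μ r₁ r t) (2 * η * x) x := by
  have h := (((hasDerivAt_pow 2 x).add_const (μ * (r₁ - r))).const_mul η).const_add c
  exact h.congr_deriv (by push_cast; ring)

theorem hasStripOpAt_stripBarrier (a b e r x : ℝ) :
    HasStripOpAt a b e (stripBarrier c η μ r₁) (η * (2 * b - μ * e)) r x := by
  exact ⟨-(η * μ), 0, 2 * η * x, 2 * η,
    ⟨fun _ => -(η * μ), .of_forall fun s => hasDerivAt_stripBarrier_fst c η μ r₁ s x, rfl,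
      hasDerivAt_const _ _⟩,
    ⟨fun t => 2 * η * t, .of_forall fun t => hasDerivAt_stripBarrier_snd c η μ r₁ r t, rfl,
      by simpa using (hasDerivAt_id x).const_mul (2 * η)⟩, by ring⟩

variable {η μ r₁} in
theorem add_mul_sq_le_stripBarrier (hη : 0 ≤ η) (hμ : 0 ≤ μ) {r : ℝ} (hr : r ≤ r₁) (x : ℝ) :
    c + η * x ^ 2 ≤ stripBarrier c η μ r₁ r x := by
  have hlin : 0 ≤ η * (μ * (r₁ - r)) := mul_nonneg hη (mul_nonneg hμ (sub_nonneg.2 hr))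
  rw [stripBarrier]
  linarith

end Barrier

theorem eventually_cobounded_le_mul_sq (C : ℝ) {ε : ℝ} (hε : 0 < ε) :
    ∀ᶠ x in cobounded ℝ, C ≤ ε * x ^ 2 := by
  have hsq : Tendsto (fun x : ℝ => ε * ‖x‖ ^ 2) (cobounded ℝ) atTop :=
    ((tendsto_pow_atTop two_ne_zero).comp tendsto_norm_cobounded_atTop).const_mul_atTop hε
  simpa using hsq.eventually_ge_atTop C

section MaximumPrinciple

variable {r₀ r₁ c μ : ℝ} {a b e u : ℝ → ℝ → ℝ}

theorem le_stripBarrier_of_subsolution {η : ℝ} (hη : 0 < η) (hμ : 0 < μ)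
    (ha : ∀ r ∈ Ioo r₀ r₁, ∀ x, 0 ≤ a r x) (hb : ∀ r ∈ Ioo r₀ r₁, ∀ x, 0 ≤ b r x)
    (hbe : ∀ r ∈ Ioo r₀ r₁, ∀ x, 2 * b r x < μ * e r x)
    (hcont : ContinuousOn (uncurry u) (Icc r₀ r₁ ×ˢ univ))
    (hop : ∀ r ∈ Ioo r₀ r₁, ∀ x, ∃ v ≥ 0, HasStripOpAt (a r x) (b r x) (e r x) u v r x)
    (hleft : ∀ x, ∃ d ≥ 0, HasDerivWithinAt (fun s => u s x) d (Icc r₀ r₁) r₀)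
    (hright : ∀ x, u r₁ x ≤ c)
    (hgrowth : ∀ᶠ x in cobounded ℝ, ∀ r ∈ Icc r₀ r₁, u r x ≤ c + η * x ^ 2) :
    ∀ r ∈ Icc r₀ r₁, ∀ x, u r x ≤ stripBarrier c η μ r₁ r x := by
  let w : ℝ → ℝ → ℝ := fun s t => u s t - stripBarrier c η μ r₁ s t
  have hw_cont : ContinuousOn (uncurry w) (Icc r₀ r₁ ×ˢ univ) :=
    hcont.sub (continuous_stripBarrier c η μ r₁).continuousOn
  have hw_op : ∀ s ∈ Ioo r₀ r₁, ∀ t,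
      ∃ v > 0, HasStripOpAt (a s t) (b s t) (e s t) w v s t := by
    intro s hs t
    obtain ⟨v, hv, huv⟩ := hop s hs t
    have hbarrier : η * (2 * b s t - μ * e s t) < 0 :=
      mul_neg_of_pos_of_neg hη (sub_neg.2 (hbe s hs t))
    exact ⟨_, by linarith, huv.sub (hasStripOpAt_stripBarrier c η μ r₁ _ _ _ s t)⟩
  have hw_left : ∀ t, ∃ d > 0, HasDerivWithinAt (fun s => w s t) d (Icc r₀ r₁) r₀ := by
    intro t
    obtain ⟨d, hd, hderiv⟩ := hleft t
    exact ⟨d - -(η * μ), by linarith [mul_pos hη hμ],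
      hderiv.sub (hasDerivAt_stripBarrier_fst c η μ r₁ r₀ t).hasDerivWithinAt⟩
  have hw_right : ∀ t, w r₁ t ≤ 0 := by
    intro t
    have hηt : c ≤ c + η * t ^ 2 := le_add_of_nonneg_right (by positivity)
    exact sub_nonpos.2 (((hright t).trans hηt).trans
      (add_mul_sq_le_stripBarrier c hη.le hμ.le le_rfl t))
  obtain ⟨R, -, hR⟩ := hasBasis_cobounded_norm.eventually_iff.1 hgrowth
  have hw_far : ∀ t, R ≤ |t| → ∀ s ∈ Icc r₀ r₁, w s t ≤ 0 := fun t ht s hs =>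
    sub_nonpos.2 ((hR ht s hs).trans (add_mul_sq_le_stripBarrier c hη.le hμ.le hs.2 t))
  intro r hr x
  let L : ℝ := max R |x|
  have hRL : R ≤ |L| := (le_max_left _ _).trans (le_abs_self _)
  exact sub_nonpos.1 (nonpos_on_rectangle_of_strict_subsolution
    (fun s hs t _ => ha s hs t) (fun s hs t _ => hb s hs t)
    (hw_cont.mono (prod_mono_right (subset_univ _))) (fun s hs t _ => hw_op s hs t)
    (fun t _ => hw_left t) (fun t _ => hw_right t)
    (hw_far (-L) (hRL.trans_eq (abs_neg L).symm)) (hw_far L hRL)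
    r hr x (abs_le.1 (le_max_right _ _)))

theorem le_on_strip_of_subsolution (hμ : 0 < μ)
    (ha : ∀ r ∈ Ioo r₀ r₁, ∀ x, 0 ≤ a r x) (hb : ∀ r ∈ Ioo r₀ r₁, ∀ x, 0 ≤ b r x)
    (hbe : ∀ r ∈ Ioo r₀ r₁, ∀ x, 2 * b r x < μ * e r x)
    (hcont : ContinuousOn (uncurry u) (Icc r₀ r₁ ×ˢ univ))
    (hop : ∀ r ∈ Ioo r₀ r₁, ∀ x, ∃ v ≥ 0, HasStripOpAt (a r x) (b r x) (e r x) u v r x)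
    (hleft : ∀ x, ∃ d ≥ 0, HasDerivWithinAt (fun s => u s x) d (Icc r₀ r₁) r₀)
    (hright : ∀ x, u r₁ x ≤ c)
    (hgrowth : ∀ ε > 0, ∀ᶠ x in cobounded ℝ, ∀ r ∈ Icc r₀ r₁, u r x ≤ ε * x ^ 2) :
    ∀ r ∈ Icc r₀ r₁, ∀ x, u r x ≤ c := by
  intro r hr x
  have hlim : Tendsto (fun η => stripBarrier c η μ r₁ r x) (𝓝[>] 0) (𝓝 c) := by
    have hcts : Continuous fun η => stripBarrier c η μ r₁ r x := by
      unfold stripBarrier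
      fun_prop
    simpa [stripBarrier] using (hcts.tendsto 0).mono_left nhdsWithin_le_nhds
  refine ge_of_tendsto hlim (eventually_mem_nhdsWithin.mono fun η hη => ?_)
  have hη2 : 0 < η / 2 := half_pos hη
  refine le_stripBarrier_of_subsolution hη hμ ha hb hbe hcont hop hleft hright ?_ r hr x
  filter_upwards [hgrowth _ hη2, eventually_cobounded_le_mul_sq (-c) hη2] with t hu hc s hs
  linarith [hu s hs]

end MaximumPrinciple

theorem exists_pos_forall_lt_mul_of_isCompact {X : Type*} [TopologicalSpace X] {K : Set X}
    (hK : IsCompact K) {f g : X → ℝ} (hf : ContinuousOn f K) (hg : ContinuousOn g K)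
    (hg_pos : ∀ x ∈ K, 0 < g x) : ∃ μ > 0, ∀ x ∈ K, f x < μ * g x := by
  obtain ⟨B, hB⟩ := hK.bddAbove_image (hf.div hg fun x hx => (hg_pos x hx).ne')
  refine ⟨max B 0 + 1, by positivity, fun x hx => (div_lt_iff₀ (hg_pos x hx)).1 ?_⟩
  calc f x / g x ≤ B := hB (mem_image_of_mem _ hx)
    _ ≤ max B 0 := le_max_left _ _
    _ < max B 0 + 1 := lt_add_one _

theorem strip_liouville_general {r0 r1 c μ : ℝ} {A11 A33 e1 ψ ψr ψrr ψx ψxx : ℝ → ℝ → ℝ}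
    (hμ : 0 < μ)
    (hA11 : ∀ r ∈ Ioo r0 r1, ∀ x3, 0 ≤ A11 r x3) (hA33 : ∀ r ∈ Ioo r0 r1, ∀ x3, 0 ≤ A33 r x3)
    (hA33e1 : ∀ r ∈ Ioo r0 r1, ∀ x3, 2 * A33 r x3 < μ * e1 r x3)
    (hgrowth : ∀ ε > 0, ∀ᶠ x3 in cobounded ℝ, ∀ r ∈ Icc r0 r1, |ψ r x3| ≤ ε * x3 ^ 2)
    (hcont : ContinuousOn (fun p : ℝ × ℝ => ψ p.1 p.2) (Icc r0 r1 ×ˢ univ))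
    (hψr : ∀ r ∈ Ioo r0 r1, ∀ x3, HasDerivAt (fun s => ψ s x3) (ψr r x3) r)
    (hψrr : ∀ r ∈ Ioo r0 r1, ∀ x3, HasDerivAt (fun s => ψr s x3) (ψrr r x3) r)
    (hψx : ∀ r ∈ Ioo r0 r1, ∀ x3, HasDerivAt (fun t => ψ r t) (ψx r x3) x3)
    (hψxx : ∀ r ∈ Ioo r0 r1, ∀ x3, HasDerivAt (fun t => ψx r t) (ψxx r x3) x3)
    (hPDE : ∀ r ∈ Ioo r0 r1, ∀ x3,
      A11 r x3 * ψrr r x3 + A33 r x3 * ψxx r x3 + e1 r x3 * ψr r x3 = 0)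
    (hNeu : ∀ x3, HasDerivWithinAt (fun s => ψ s x3) 0 (Icc r0 r1) r0)
    (hDir : ∀ x3, ψ r1 x3 = c) :
    ∀ r ∈ Icc r0 r1, ∀ x3, ψ r x3 = c := by
  have hop : ∀ r ∈ Ioo r0 r1, ∀ x3,
      HasStripOpAt (A11 r x3) (A33 r x3) (e1 r x3) ψ 0 r x3 := by
    intro r hr x3
    have hψr_near : ∀ᶠ s in 𝓝 r, HasDerivAt (fun s => ψ s x3) (ψr s x3) s := by
      filter_upwards [isOpen_Ioo.mem_nhds hr] with s hs using hψr s hs x3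
    exact ⟨_, _, _, _, ⟨fun s => ψr s x3, hψr_near, rfl, hψrr r hr x3⟩,
      ⟨ψx r, .of_forall (hψx r hr), rfl, hψxx r hr x3⟩, hPDE r hr x3⟩
  have hupper : ∀ r ∈ Icc r0 r1, ∀ x3, ψ r x3 ≤ c :=
    le_on_strip_of_subsolution hμ hA11 hA33 hA33e1 hcont (fun r hr x3 => ⟨0, le_rfl, hop r hr x3⟩)
      (fun x3 => ⟨0, le_rfl, hNeu x3⟩) (fun x3 => (hDir x3).le)
      fun ε hε => (hgrowth ε hε).mono fun _ h r hr => (le_abs_self _).trans (h r hr)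
  have hlower : ∀ r ∈ Icc r0 r1, ∀ x3, -ψ r x3 ≤ -c :=
    le_on_strip_of_subsolution hμ hA11 hA33 hA33e1 hcont.neg
      (fun r hr x3 => ⟨-0, neg_zero.ge, (hop r hr x3).neg⟩)
      (fun x3 => ⟨-0, neg_zero.ge, (hNeu x3).neg⟩) (fun x3 => (neg_inj.2 (hDir x3)).le)
      fun ε hε => (hgrowth ε hε).mono fun _ h r hr => (neg_le_abs _).trans (h r hr)
  exact fun r hr x3 => le_antisymm (hupper r hr x3) (neg_le_neg_iff.1 (hlower r hr x3))

/-- Liouville-type uniqueness on the infinite strip `[r0, r1] × ℝ`: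
a bounded solution of `A11 ∂_r²ψ + A33 ∂_{x3}²ψ + e1 ∂_rψ = 0` with homogeneous Neumann
condition at `r = r0` and constant Dirichlet value `c` at `r = r1` is identically `c`. -/
theorem strip_liouville
    (r0 r1 c : ℝ) (hr0 : 0 < r0) (hr01 : r0 < r1)
    (A11 A33 e1 : ℝ → ℝ)
    (hA11c : ContinuousOn A11 (Icc r0 r1)) (hA33c : ContinuousOn A33 (Icc r0 r1))
    (he1c : ContinuousOn e1 (Icc r0 r1))
    (hA11 : ∀ r ∈ Icc r0 r1, 0 < A11 r) (hA33 : ∀ r ∈ Icc r0 r1, 0 < A33 r)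
    (he1 : ∀ r ∈ Icc r0 r1, 0 < e1 r)
    (ψ ψr ψrr ψx ψxx : ℝ → ℝ → ℝ)
    (hbdd : ∃ M : ℝ, ∀ r ∈ Icc r0 r1, ∀ x3 : ℝ, |ψ r x3| ≤ M)
    (hcont : ContinuousOn (fun p : ℝ × ℝ => ψ p.1 p.2) (Icc r0 r1 ×ˢ univ))
    (hψr : ∀ r ∈ Ico r0 r1, ∀ x3 : ℝ,
      HasDerivWithinAt (fun s => ψ s x3) (ψr r x3) (Icc r0 r1) r)
    (hψrr : ∀ r ∈ Ico r0 r1, ∀ x3 : ℝ,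
      HasDerivWithinAt (fun s => ψr s x3) (ψrr r x3) (Icc r0 r1) r)
    (hψx : ∀ r ∈ Ico r0 r1, ∀ x3 : ℝ, HasDerivAt (fun t => ψ r t) (ψx r x3) x3)
    (hψxx : ∀ r ∈ Ico r0 r1, ∀ x3 : ℝ, HasDerivAt (fun t => ψx r t) (ψxx r x3) x3)
    (hψrC : ContinuousOn (fun p : ℝ × ℝ => ψr p.1 p.2) (Ico r0 r1 ×ˢ univ))
    (hψxC : ContinuousOn (fun p : ℝ × ℝ => ψx p.1 p.2) (Ico r0 r1 ×ˢ univ))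
    (hψrrC : ContinuousOn (fun p : ℝ × ℝ => ψrr p.1 p.2) (Ico r0 r1 ×ˢ univ))
    (hψxxC : ContinuousOn (fun p : ℝ × ℝ => ψxx p.1 p.2) (Ico r0 r1 ×ˢ univ))
    (hPDE : ∀ r ∈ Ioo r0 r1, ∀ x3 : ℝ,
      A11 r * ψrr r x3 + A33 r * ψxx r x3 + e1 r * ψr r x3 = 0)
    (hNeu : ∀ x3 : ℝ, ψr r0 x3 = 0)
    (hDir : ∀ x3 : ℝ, ψ r1 x3 = c) :
    ∀ r ∈ Icc r0 r1, ∀ x3 : ℝ, ψ r x3 = c := by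
  obtain ⟨M, hM⟩ := hbdd
  obtain ⟨μ, hμ, hμe1⟩ := exists_pos_forall_lt_mul_of_isCompact isCompact_Icc
    (continuousOn_const.mul hA33c) he1c he1
  have hIcc {r : ℝ} (hr : r ∈ Ioo r0 r1) : Icc r0 r1 ∈ 𝓝 r := Icc_mem_nhds hr.1 hr.2
  exact strip_liouville_general (A11 := fun r _ => A11 r) (A33 := fun r _ => A33 r)
    (e1 := fun r _ => e1 r) hμ
    (fun r hr _ => (hA11 r (Ioo_subset_Icc_self hr)).le)
    (fun r hr _ => (hA33 r (Ioo_subset_Icc_self hr)).le)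
    (fun r hr _ => hμe1 r (Ioo_subset_Icc_self hr))
    (fun ε hε => (eventually_cobounded_le_mul_sq M hε).mono fun x3 h r hr => (hM r hr x3).trans h)
    hcont
    (fun r hr x3 => (hψr r (Ioo_subset_Ico_self hr) x3).hasDerivAt (hIcc hr))
    (fun r hr x3 => (hψrr r (Ioo_subset_Ico_self hr) x3).hasDerivAt (hIcc hr))
    (fun r hr => hψx r (Ioo_subset_Ico_self hr)) (fun r hr => hψxx r (Ioo_subset_Ico_self hr))
    hPDE (fun x3 => hNeu x3 ▸ hψr r0 (left_mem_Ico.2 hr01) x3) hDir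
end

section
/- Let 0 < r0 < r1, n > 0, and let Q = (r0, r1) × (−n, n). Let A11, A33, e1 : [r0, r1] → ℝ be continuous with A11 > 0, A33 > 0 and e1(r) ≥ e_min > 0 on [r0, r1]. Then there exists a constant C, depending only on r1 and e_min, with the following property: if φ is continuous on the closure of Q, twice continuously differentiable in Q with ∂_rφ extending continuously to {r0} × [−n, n], and satisfies A11(r) ∂_r²φ + A33(r) ∂_{x3}²φ + e1(r) ∂_rφ = G in Q, ∂_rφ(r0, x3) = g(x3) for x3 ∈ [−n, n], and |φ| ≤ h0 on the remaining three boundary sides {r1} × [−n, n], [r0, r1] × {−n} and [r0, r1] × {n}, then sup over the closure of Q of |φ| is at most C · (sup_Q |G| + sup |g| + h0). -/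
open Real Set

/-!
Let `L` be the operator, with drift `e`, on the rectangle `[a, b] × [c, d]`, and let `K` dominate
both `|Lφ| / e` in the interior and the Neumann datum on `r = a`. Adding the barrier `k (r - b)`
with `k > K` to `φ` gives a function `w` with `Lw > 0` inside and `∂_r w > 0` on the Neumann side.
At an interior maximum the gradient vanishes and both pure second derivatives are nonpositive, so
`Lw ≤ 0` there; at a maximum on the Neumann side `∂_r w ≤ 0`. Hence `w` is maximal on the Dirichlet
sides, where it is at most `φ`. Let `k` tend to `K`, and repeat with `-φ`.
-/

open Filter Topology

section Calculus

variable {f f' : ℝ → ℝ} {a c : ℝ}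

theorem second_deriv_nonpos_of_isLocalMax (hmax : IsLocalMax f a)
    (hf : ∀ᶠ t in 𝓝 a, HasDerivAt f (f' t) t) (hf' : HasDerivAt f' c a) : c ≤ 0 := by
  by_contra! hc
  have hderiv : deriv (deriv f) a = c := by
    have hd : deriv f =ᶠ[𝓝 a] f' := hf.mono fun t ht => ht.deriv
    rw [hd.deriv_eq, hf'.deriv]
  have hmin : IsLocalMin f a :=
    isLocalMin_of_deriv_deriv_pos (hderiv ▸ hc) hmax.deriv_eq_zero hf.self_of_nhds.continuousAt
  have hconst : f =ᶠ[𝓝 a] fun _ => f a := by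
    filter_upwards [hmin, hmax] with t hle hge using le_antisymm hge hle
  have hzero : deriv (deriv f) a = 0 := by
    rw [hconst.deriv.deriv_eq]
    simp
  exact hc.ne' (hderiv.symm.trans hzero)

theorem hasDerivWithinAt_Ici_nonpos_of_isLocalMaxOn (hmax : IsLocalMaxOn f (Ici a) a)
    (hf : HasDerivWithinAt f c (Ici a) a) : c ≤ 0 := by
  have hone : (1 : ℝ) ∈ posTangentConeAt (Ici a) a :=
    one_mem_posTangentConeAt_iff_frequently.2
      (eventually_mem_nhdsWithin.mono fun _ ht => Ioi_subset_Ici_self ht).frequently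
  simpa using hmax.hasFDerivWithinAt_nonpos hf.hasFDerivWithinAt hone

theorem hasDerivWithinAt_Ici_of_hasDerivAt_Ioo {b : ℝ} (hab : a < b)
    (hf : ∀ t ∈ Ioo a b, HasDerivAt f (f' t) t) (hfa : ContinuousWithinAt f (Ioo a b) a)
    (hf'a : ContinuousWithinAt f' (Ioo a b) a) : HasDerivWithinAt f (f' a) (Ici a) a := by
  have hlim : Tendsto f' (𝓝[>] a) (𝓝 (f' a)) := by
    rw [← nhdsWithin_Ioo_eq_nhdsGT hab]
    exact hf'a
  refine hasDerivWithinAt_Ici_of_tendsto_deriv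
    (fun t ht => (hf t ht).differentiableAt.differentiableWithinAt) hfa
    (Ioo_mem_nhdsGT hab) (hlim.congr' ?_)
  filter_upwards [Ioo_mem_nhdsGT hab] with t ht using (hf t ht).deriv.symm

end Calculus

/-- Regularity of classical solutions of the mixed problem on `[a, b] × [c, d]`: `u` is continuous,
has the pure partial derivatives `ur`, `urr`, `ux`, `uxx` in the interior, and has the one-sided
`r`-derivative `ur a x` at the points `(a, x)` of the open Neumann side. -/
structure IsRegularOnRectangle (a b c d : ℝ) (u ur urr ux uxx : ℝ → ℝ → ℝ) : Prop where
  continuousOn : ContinuousOn (fun p : ℝ × ℝ => u p.1 p.2) (Icc a b ×ˢ Icc c d)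
  hasDerivAt_r : ∀ r ∈ Ioo a b, ∀ x ∈ Ioo c d, HasDerivAt (fun s => u s x) (ur r x) r
  hasDerivAt_rr : ∀ r ∈ Ioo a b, ∀ x ∈ Ioo c d, HasDerivAt (fun s => ur s x) (urr r x) r
  hasDerivAt_x : ∀ r ∈ Ioo a b, ∀ x ∈ Ioo c d, HasDerivAt (fun t => u r t) (ux r x) x
  hasDerivAt_xx : ∀ r ∈ Ioo a b, ∀ x ∈ Ioo c d, HasDerivAt (fun t => ux r t) (uxx r x) x
  hasDerivWithinAt_left : ∀ x ∈ Ioo c d, HasDerivWithinAt (fun s => u s x) (ur a x) (Ici a) a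

namespace IsRegularOnRectangle

variable {a b c d : ℝ} {u ur urr ux uxx : ℝ → ℝ → ℝ}

theorem of_continuousOn_union_left (hab : a < b)
    (hu : ContinuousOn (fun p : ℝ × ℝ => u p.1 p.2) (Icc a b ×ˢ Icc c d))
    (hr : ∀ r ∈ Ioo a b, ∀ x ∈ Ioo c d, HasDerivAt (fun s => u s x) (ur r x) r)
    (hrr : ∀ r ∈ Ioo a b, ∀ x ∈ Ioo c d, HasDerivAt (fun s => ur s x) (urr r x) r)
    (hx : ∀ r ∈ Ioo a b, ∀ x ∈ Ioo c d, HasDerivAt (fun t => u r t) (ux r x) x)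
    (hxx : ∀ r ∈ Ioo a b, ∀ x ∈ Ioo c d, HasDerivAt (fun t => ux r t) (uxx r x) x)
    (hur : ContinuousOn (fun p : ℝ × ℝ => ur p.1 p.2)
      ((Ioo a b ×ˢ Ioo c d) ∪ ({a} ×ˢ Icc c d))) :
    IsRegularOnRectangle a b c d u ur urr ux uxx := by
  refine ⟨hu, hr, hrr, hx, hxx, fun x hxI => ?_⟩
  have hxI' : x ∈ Icc c d := Ioo_subset_Icc_self hxI
  have hslice : ContinuousWithinAt (fun s : ℝ => (s, x)) (Ioo a b) a := by fun_prop
  have hu_slice : ContinuousWithinAt (fun s => u s x) (Ioo a b) a :=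
    (hu (a, x) ⟨left_mem_Icc.2 hab.le, hxI'⟩).comp (f := fun s : ℝ => (s, x)) hslice
      fun _ hs => ⟨Ioo_subset_Icc_self hs, hxI'⟩
  have hur_slice : ContinuousWithinAt (fun s => ur s x) (Ioo a b) a :=
    (hur (a, x) (Or.inr ⟨rfl, hxI'⟩)).comp (f := fun s : ℝ => (s, x)) hslice
      fun _ hs => Or.inl ⟨hs, hxI⟩
  exact hasDerivWithinAt_Ici_of_hasDerivAt_Ioo hab (fun s hs => hr s hs x hxI) hu_slice hur_slice

theorem neg (hu : IsRegularOnRectangle a b c d u ur urr ux uxx) :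
    IsRegularOnRectangle a b c d (fun r x => -u r x) (fun r x => -ur r x) (fun r x => -urr r x)
      (fun r x => -ux r x) (fun r x => -uxx r x) where
  continuousOn := hu.continuousOn.neg
  hasDerivAt_r r hr x hx := (hu.hasDerivAt_r r hr x hx).neg
  hasDerivAt_rr r hr x hx := (hu.hasDerivAt_rr r hr x hx).neg
  hasDerivAt_x r hr x hx := (hu.hasDerivAt_x r hr x hx).neg
  hasDerivAt_xx r hr x hx := (hu.hasDerivAt_xx r hr x hx).neg
  hasDerivWithinAt_left x hx := (hu.hasDerivWithinAt_left x hx).neg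

theorem add_linear (hu : IsRegularOnRectangle a b c d u ur urr ux uxx) (k q : ℝ) :
    IsRegularOnRectangle a b c d (fun r x => u r x + k * (r - q)) (fun r x => ur r x + k)
      urr ux uxx := by
  have hlin (r : ℝ) : HasDerivAt (fun s => k * (s - q)) k r := by
    simpa using ((hasDerivAt_id r).sub_const q).const_mul k
  exact
    { continuousOn := hu.continuousOn.add (by fun_prop)
      hasDerivAt_r := fun r hr x hx => (hu.hasDerivAt_r r hr x hx).add (hlin r)
      hasDerivAt_rr := fun r hr x hx => (hu.hasDerivAt_rr r hr x hx).add_const k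
      hasDerivAt_x := fun r hr x hx => (hu.hasDerivAt_x r hr x hx).add_const _
      hasDerivAt_xx := hu.hasDerivAt_xx
      hasDerivWithinAt_left := fun x hx =>
        (hu.hasDerivWithinAt_left x hx).add (hlin a).hasDerivWithinAt }

theorem partials_of_isMaxOn_interior (hu : IsRegularOnRectangle a b c d u ur urr ux uxx) {r x : ℝ}
    (hr : r ∈ Ioo a b) (hx : x ∈ Ioo c d)
    (hmax : IsMaxOn (fun p : ℝ × ℝ => u p.1 p.2) (Icc a b ×ˢ Icc c d) (r, x)) :
    ur r x = 0 ∧ urr r x ≤ 0 ∧ uxx r x ≤ 0 := by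
  have hr_nhds : Ioo a b ∈ 𝓝 r := isOpen_Ioo.mem_nhds hr
  have hx_nhds : Ioo c d ∈ 𝓝 x := isOpen_Ioo.mem_nhds hx
  have hmax_r : IsLocalMax (fun s => u s x) r := by
    filter_upwards [hr_nhds] with s hs
    exact @hmax (s, x) ⟨Ioo_subset_Icc_self hs, Ioo_subset_Icc_self hx⟩
  have hmax_x : IsLocalMax (fun t => u r t) x := by
    filter_upwards [hx_nhds] with t ht
    exact @hmax (r, t) ⟨Ioo_subset_Icc_self hr, Ioo_subset_Icc_self ht⟩
  refine ⟨hmax_r.hasDerivAt_eq_zero (hu.hasDerivAt_r r hr x hx), ?_, ?_⟩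
  · refine second_deriv_nonpos_of_isLocalMax hmax_r ?_ (hu.hasDerivAt_rr r hr x hx)
    filter_upwards [hr_nhds] with s hs using hu.hasDerivAt_r s hs x hx
  · refine second_deriv_nonpos_of_isLocalMax hmax_x ?_ (hu.hasDerivAt_xx r hr x hx)
    filter_upwards [hx_nhds] with t ht using hu.hasDerivAt_x r hr t ht

theorem deriv_left_nonpos_of_isMaxOn (hu : IsRegularOnRectangle a b c d u ur urr ux uxx)
    (hab : a < b) {x : ℝ} (hx : x ∈ Ioo c d)
    (hmax : IsMaxOn (fun p : ℝ × ℝ => u p.1 p.2) (Icc a b ×ˢ Icc c d) (a, x)) :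
    ur a x ≤ 0 := by
  have hmax_r : IsLocalMaxOn (fun s => u s x) (Ici a) a := by
    filter_upwards [Icc_mem_nhdsGE hab] with s hs
    exact @hmax (s, x) ⟨hs, Ioo_subset_Icc_self hx⟩
  exact hasDerivWithinAt_Ici_nonpos_of_isLocalMaxOn hmax_r (hu.hasDerivWithinAt_left x hx)

variable {A B e : ℝ → ℝ → ℝ} {h K : ℝ}

theorem le_of_operator_pos (hu : IsRegularOnRectangle a b c d u ur urr ux uxx)
    (hA : ∀ r ∈ Ioo a b, ∀ x ∈ Ioo c d, 0 ≤ A r x)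
    (hB : ∀ r ∈ Ioo a b, ∀ x ∈ Ioo c d, 0 ≤ B r x)
    (hLu : ∀ r ∈ Ioo a b, ∀ x ∈ Ioo c d,
      0 < A r x * urr r x + B r x * uxx r x + e r x * ur r x)
    (hleft : ∀ x ∈ Ioo c d, 0 < ur a x)
    (hright : ∀ x ∈ Icc c d, u b x ≤ h)
    (htop : ∀ r ∈ Icc a b, u r d ≤ h)
    (hbot : ∀ r ∈ Icc a b, u r c ≤ h) :
    ∀ r ∈ Icc a b, ∀ x ∈ Icc c d, u r x ≤ h := by
  intro r hr x hx
  obtain ⟨⟨s, t⟩, ⟨hs, ht⟩, hmax⟩ := (isCompact_Icc.prod isCompact_Icc).exists_isMaxOn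
    ⟨(r, x), hr, hx⟩ hu.continuousOn
  refine (@hmax (r, x) ⟨hr, hx⟩).trans (?_ : u s t ≤ h)
  rcases eq_endpoints_or_mem_Ioo_of_mem_Icc ht with rfl | rfl | ht
  · exact hbot s hs
  · exact htop s hs
  rcases eq_endpoints_or_mem_Ioo_of_mem_Icc hs with rfl | rfl | hs
  · rcases hs.2.eq_or_lt with rfl | hab
    · exact hright t (Ioo_subset_Icc_self ht)
    · exact absurd (hu.deriv_left_nonpos_of_isMaxOn hab ht hmax) (hleft t ht).not_ge
  · exact hright t (Ioo_subset_Icc_self ht)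
  · obtain ⟨hur, hurr, huxx⟩ := hu.partials_of_isMaxOn_interior hs ht hmax
    have hLu_nonpos : A s t * urr s t + B s t * uxx s t + e s t * ur s t ≤ 0 := by
      rw [hur, mul_zero, add_zero]
      exact add_nonpos (mul_nonpos_of_nonneg_of_nonpos (hA s hs t ht) hurr)
        (mul_nonpos_of_nonneg_of_nonpos (hB s hs t ht) huxx)
    exact absurd hLu_nonpos (hLu s hs t ht).not_ge

theorem le_add_barrier (hu : IsRegularOnRectangle a b c d u ur urr ux uxx)
    (hA : ∀ r ∈ Ioo a b, ∀ x ∈ Ioo c d, 0 ≤ A r x)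
    (hB : ∀ r ∈ Ioo a b, ∀ x ∈ Ioo c d, 0 ≤ B r x)
    (he : ∀ r ∈ Ioo a b, ∀ x ∈ Ioo c d, 0 < e r x)
    (hK : 0 ≤ K)
    (hLu : ∀ r ∈ Ioo a b, ∀ x ∈ Ioo c d,
      -(K * e r x) ≤ A r x * urr r x + B r x * uxx r x + e r x * ur r x)
    (hleft : ∀ x ∈ Ioo c d, -K ≤ ur a x)
    (hright : ∀ x ∈ Icc c d, u b x ≤ h)
    (htop : ∀ r ∈ Icc a b, u r d ≤ h)
    (hbot : ∀ r ∈ Icc a b, u r c ≤ h) :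
    ∀ r ∈ Icc a b, ∀ x ∈ Icc c d, u r x ≤ h + K * (b - r) := by
  intro r hr x hx
  have strict_barrier : ∀ k > K, u r x + k * (r - b) ≤ h := by
    intro k hk
    have barrier_nonpos : ∀ s ∈ Icc a b, k * (s - b) ≤ 0 := fun s hs =>
      mul_nonpos_of_nonneg_of_nonpos (hK.trans hk.le) (sub_nonpos.2 hs.2)
    refine (hu.add_linear k b).le_of_operator_pos hA hB (e := e) (fun s hs t ht => ?_)
      (fun t ht => by linarith [hleft t ht]) (fun t ht => by simpa using hright t ht)
      (fun s hs => by linarith [htop s hs, barrier_nonpos s hs])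
      (fun s hs => by linarith [hbot s hs, barrier_nonpos s hs]) r hr x hx
    have hdrift : K * e s t < k * e s t := mul_lt_mul_of_pos_right hk (he s hs t ht)
    linarith [hLu s hs t ht]
  have hcont : Tendsto (fun k => u r x + k * (r - b)) (𝓝[>] K) (𝓝 (u r x + K * (r - b))) :=
    (Continuous.tendsto (by fun_prop) K).mono_left nhdsWithin_le_nhds
  have hlimit : u r x + K * (r - b) ≤ h :=
    le_of_tendsto hcont (eventually_nhdsWithin_of_forall strict_barrier)
  linarith

theorem abs_le_add_barrier (hu : IsRegularOnRectangle a b c d u ur urr ux uxx)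
    (hA : ∀ r ∈ Ioo a b, ∀ x ∈ Ioo c d, 0 ≤ A r x)
    (hB : ∀ r ∈ Ioo a b, ∀ x ∈ Ioo c d, 0 ≤ B r x)
    (he : ∀ r ∈ Ioo a b, ∀ x ∈ Ioo c d, 0 < e r x)
    (hK : 0 ≤ K)
    (hLu : ∀ r ∈ Ioo a b, ∀ x ∈ Ioo c d,
      |A r x * urr r x + B r x * uxx r x + e r x * ur r x| ≤ K * e r x)
    (hleft : ∀ x ∈ Ioo c d, |ur a x| ≤ K)
    (hright : ∀ x ∈ Icc c d, |u b x| ≤ h)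
    (htop : ∀ r ∈ Icc a b, |u r d| ≤ h)
    (hbot : ∀ r ∈ Icc a b, |u r c| ≤ h) :
    ∀ r ∈ Icc a b, ∀ x ∈ Icc c d, |u r x| ≤ h + K * (b - r) := by
  intro r hr x hx
  refine abs_le'.2 ⟨?_, ?_⟩
  · exact hu.le_add_barrier hA hB he hK (fun s hs t ht => neg_le_of_abs_le (hLu s hs t ht))
      (fun t ht => neg_le_of_abs_le (hleft t ht)) (fun t ht => le_of_abs_le (hright t ht))
      (fun s hs => le_of_abs_le (htop s hs)) (fun s hs => le_of_abs_le (hbot s hs)) r hr x hx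
  · exact hu.neg.le_add_barrier hA hB he hK
      (fun s hs t ht => by linarith [le_of_abs_le (hLu s hs t ht)])
      (fun t ht => neg_le_neg (le_of_abs_le (hleft t ht)))
      (fun t ht => neg_le.1 (neg_le_of_abs_le (hright t ht)))
      (fun s hs => neg_le.1 (neg_le_of_abs_le (htop s hs)))
      (fun s hs => neg_le.1 (neg_le_of_abs_le (hbot s hs))) r hr x hx

end IsRegularOnRectangle

theorem truncated_max_principle_general {a b c d ℓ emin : ℝ} (hab : a < b) (hcd : c < d)
    (hℓ : b - a ≤ ℓ) (hemin : 0 < emin) {A B e φ φr φrr φx φxx : ℝ → ℝ → ℝ} {h MG Mg : ℝ}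
    (hφ : IsRegularOnRectangle a b c d φ φr φrr φx φxx)
    (hA : ∀ r ∈ Ioo a b, ∀ x ∈ Ioo c d, 0 ≤ A r x)
    (hB : ∀ r ∈ Ioo a b, ∀ x ∈ Ioo c d, 0 ≤ B r x)
    (he : ∀ r ∈ Ioo a b, ∀ x ∈ Ioo c d, emin ≤ e r x)
    (hMG : ∀ r ∈ Ioo a b, ∀ x ∈ Ioo c d,
      |A r x * φrr r x + B r x * φxx r x + e r x * φr r x| ≤ MG)
    (hMg : ∀ x ∈ Ioo c d, |φr a x| ≤ Mg)
    (hright : ∀ x ∈ Icc c d, |φ b x| ≤ h)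
    (htop : ∀ r ∈ Icc a b, |φ r d| ≤ h)
    (hbot : ∀ r ∈ Icc a b, |φ r c| ≤ h) :
    ∀ r ∈ Icc a b, ∀ x ∈ Icc c d, |φ r x| ≤ (1 + ℓ + ℓ / emin) * (MG + Mg + h) := by
  intro r hr x hx
  obtain ⟨s, hs⟩ := nonempty_Ioo.2 hab
  obtain ⟨t, ht⟩ := nonempty_Ioo.2 hcd
  have hMG_nonneg : 0 ≤ MG := (abs_nonneg _).trans (hMG s hs t ht)
  have hMg_nonneg : 0 ≤ Mg := (abs_nonneg _).trans (hMg t ht)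
  have hh_nonneg : 0 ≤ h := (abs_nonneg _).trans (hbot r hr)
  have hℓ_nonneg : 0 ≤ ℓ := (sub_nonneg.2 hab.le).trans hℓ
  have hdrift : ∀ s ∈ Ioo a b, ∀ t ∈ Ioo c d, MG ≤ (MG / emin + Mg) * e s t := by
    intro s hs t ht
    calc MG = MG / emin * emin := (div_mul_cancel₀ MG hemin.ne').symm
      _ ≤ (MG / emin + Mg) * e s t := by
        gcongr
        · exact le_add_of_nonneg_right hMg_nonneg
        · exact he s hs t ht
  calc |φ r x| ≤ h + (MG / emin + Mg) * (b - r) :=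
        hφ.abs_le_add_barrier hA hB (fun s hs t ht => hemin.trans_le (he s hs t ht))
          (by positivity) (fun s hs t ht => (hMG s hs t ht).trans (hdrift s hs t ht))
          (fun t ht => (hMg t ht).trans (le_add_of_nonneg_left (by positivity)))
          hright htop hbot r hr x hx
    _ ≤ h + (MG / emin + Mg) * ℓ := by
        gcongr
        exact (sub_le_sub_left hr.1 b).trans hℓ
    _ = 1 * h + ℓ * Mg + ℓ / emin * MG := by ring
    _ ≤ (1 + ℓ + ℓ / emin) * h + (1 + ℓ + ℓ / emin) * Mg + (1 + ℓ + ℓ / emin) * MG := by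
        have hquot : 0 ≤ ℓ / emin := by positivity
        gcongr <;> linarith
    _ = (1 + ℓ + ℓ / emin) * (MG + Mg + h) := by ring

/-- uniform-in-`n` maximum-principle estimate for the truncated mixed
Neumann–Dirichlet problems on `Q = (r0,r1) × (−n,n)`: there is a constant `C` depending
only on `r1` and `e_min` bounding `sup |φ|` by `C (sup|G| + sup|g| + h0)`. -/
theorem truncated_max_principle
    (r1 emin : ℝ) (hr1 : 0 < r1) (hemin : 0 < emin) :
    ∃ C > 0, ∀ r0 : ℝ, 0 < r0 → r0 < r1 → ∀ n : ℝ, 0 < n →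
      ∀ A11 A33 e1 : ℝ → ℝ,
      ContinuousOn A11 (Icc r0 r1) → ContinuousOn A33 (Icc r0 r1) →
      ContinuousOn e1 (Icc r0 r1) →
      (∀ r ∈ Icc r0 r1, 0 < A11 r) → (∀ r ∈ Icc r0 r1, 0 < A33 r) →
      (∀ r ∈ Icc r0 r1, emin ≤ e1 r) →
      ∀ φ φr φrr φx φxx G : ℝ → ℝ → ℝ, ∀ g : ℝ → ℝ, ∀ h0 MG Mg : ℝ,
      ContinuousOn (fun p : ℝ × ℝ => φ p.1 p.2) (Icc r0 r1 ×ˢ Icc (-n) n) →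
      (∀ r ∈ Ioo r0 r1, ∀ x ∈ Ioo (-n) n, HasDerivAt (fun s => φ s x) (φr r x) r) →
      (∀ r ∈ Ioo r0 r1, ∀ x ∈ Ioo (-n) n, HasDerivAt (fun s => φr s x) (φrr r x) r) →
      (∀ r ∈ Ioo r0 r1, ∀ x ∈ Ioo (-n) n, HasDerivAt (fun t => φ r t) (φx r x) x) →
      (∀ r ∈ Ioo r0 r1, ∀ x ∈ Ioo (-n) n, HasDerivAt (fun t => φx r t) (φxx r x) x) →
      ContinuousOn (fun p : ℝ × ℝ => φr p.1 p.2)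
        ((Ioo r0 r1 ×ˢ Ioo (-n) n) ∪ ({r0} ×ˢ Icc (-n) n)) →
      (∀ r ∈ Ioo r0 r1, ∀ x ∈ Ioo (-n) n,
        A11 r * φrr r x + A33 r * φxx r x + e1 r * φr r x = G r x) →
      (∀ x ∈ Icc (-n) n, φr r0 x = g x) →
      0 ≤ h0 →
      (∀ x ∈ Icc (-n) n, |φ r1 x| ≤ h0) →
      (∀ r ∈ Icc r0 r1, |φ r n| ≤ h0) →
      (∀ r ∈ Icc r0 r1, |φ r (-n)| ≤ h0) →
      (∀ r ∈ Ioo r0 r1, ∀ x ∈ Ioo (-n) n, |G r x| ≤ MG) →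
      (∀ x ∈ Icc (-n) n, |g x| ≤ Mg) →
      ∀ r ∈ Icc r0 r1, ∀ x ∈ Icc (-n) n, |φ r x| ≤ C * (MG + Mg + h0) := by
  refine ⟨1 + r1 + r1 / emin, by positivity, ?_⟩
  intro r0 hr0 h01 n hn A11 A33 e1 _ _ _ hA11 hA33 he1 φ φr φrr φx φxx G g h0 MG Mg
    hφ hφr hφrr hφx hφxx hφr_cont hpde hneumann _ hright htop hbot hMG hMg
  exact truncated_max_principle_general h01 (neg_lt_self hn) (sub_le_self r1 hr0.le) hemin
    (.of_continuousOn_union_left h01 hφ hφr hφrr hφx hφxx hφr_cont)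
    (fun r hr _ _ => (hA11 r (Ioo_subset_Icc_self hr)).le)
    (fun r hr _ _ => (hA33 r (Ioo_subset_Icc_self hr)).le)
    (fun r hr _ _ => he1 r (Ioo_subset_Icc_self hr))
    (fun r hr x hx => hpde r hr x hx ▸ hMG r hr x hx)
    (fun x hx => hneumann x (Ioo_subset_Icc_self hx) ▸ hMg x (Ioo_subset_Icc_self hx))
    hright htop hbot
end
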